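/- arXiv:math/0509397 — 5 statements merged into one kernel-verified Lean document; each statement's English description precedes it below -/
import Mathlib

section
/- If a web Γ = (D, A, B) is unhindered, then for every a ∈ A there exists a finite a–B path P (a finite path from a to B) such that the web Γ − V(P), obtained from Γ by deleting all vertices of P, is unhindered. -/
/-!
A wave is encoded by the set `I` of its initial vertices and the relation `N` of its edges
(`IsRW`); its paths are the `N`-trajectories starting in `I`.  A vertex is *roofed* by `S` when
every walk from it to `B` meets `S`, that is, when `Esc Γ S v` fails.  Waves can be prolonged along
each other (`IsRW.combine`), so by Zorn's lemma every web has a wave which roofs everything that any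
wave roofs (`exists_max_wave`).

The combinatorial core is an augmenting-walk argument (`exchange`): in an unhindered web, disjoint
trajectories that start in a proper subset of `A` and in one vertex outside `A`, and whose ends
roof `A`, can be replaced by a wave having all these ends.  It has two consequences:
* if `Γ` is unhindered and `Γ − y` is hindered, then some wave of `Γ` roofs `y`
  (`roofed_of_hindered`);
* if `Γ − t` is unhindered, then each wave of `Γ` can be rerouted into a wave of `Γ − t` with at
  least the same terminal vertices (`IsRW.avoid`).

For the theorem, let `T` be maximal among the sets reachable from `a` inside themselves such that
`Γ − a − F` is unhindered for every finite `F ⊆ T`.  If `T ∪ {a}` meets `B`, a path from `a` to `B`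
inside `T ∪ {a}` is as required.  Otherwise, by maximality and the first consequence, each
out-neighbour of `T ∪ {a}` outside `T` is roofed by a wave of `Γ − a − F` for some finite `F ⊆ T`.
Let `E ⊆ T` be the set of those vertices `x` of `T` that are roofed in no `Γ − a − F` with
`F ⊆ T \ {x}` finite.  The second consequence and a closure argument in countably many finite
stages (`Roofed.essential`) show that everything roofed in some `Γ − a − F` is roofed in
`Γ − a − E`.  Then a maximal wave of `Γ − a − E` roofs all of `T` and all out-neighbours of
`T ∪ {a}`, so it is a wave of `Γ` itself; as it does not start at `a`, it is a hindrance of `Γ`,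
a contradiction (`not_closed_off`).
-/


namespace ErdosMenger

variable {V : Type*}

/-- A finite path in a digraph with edge relation `E`: a nonempty list of
distinct vertices, each consecutive pair of which is a directed edge. -/
def IsFinPath (E : V → V → Prop) (p : List V) : Prop :=
  p ≠ [] ∧ p.Nodup ∧ p.Chain' E

/-- An `X`–`Y` path: a finite path starting in `X` and ending in `Y`. -/
def IsXYPath (E : V → V → Prop) (X Y : Set V) (p : List V) : Prop :=
  IsFinPath E p ∧ (∃ x ∈ X, p.head? = some x) ∧ (∃ y ∈ Y, p.getLast? = some y)

/-- `S` is `X`–`Y`-separating: every `X`–`Y` path contains a vertex of `S`. -/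
def Separates (E : V → V → Prop) (X Y S : Set V) : Prop :=
  ∀ p : List V, IsXYPath E X Y p → ∃ s ∈ S, s ∈ p


/-- A path in a digraph: either finite (a list of vertices) or infinite
(a sequence of vertices). -/
inductive GPath (V : Type*) where
  | fin : List V → GPath V
  | inf : (ℕ → V) → GPath V

namespace GPath

variable {V : Type*}

/-- The predicate that a `GPath` really is a path of the digraph with edge
relation `E`: finite paths are nonempty lists of distinct vertices whose
consecutive pairs are edges; infinite paths are injective sequences whose
consecutive pairs are edges. -/
def IsPath (E : V → V → Prop) : GPath V → Prop
  | .fin l => l ≠ [] ∧ l.Nodup ∧ l.Chain' E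
  | .inf f => Function.Injective f ∧ ∀ n, E (f n) (f (n + 1))

/-- The vertex set of a path. -/
def verts : GPath V → Set V
  | .fin l => {v | v ∈ l}
  | .inf f => Set.range f

/-- The initial vertex of a path. -/
def initv : GPath V → Option V
  | .fin l => l.head?
  | .inf f => some (f 0)

/-- The terminal vertex of a (finite) path. -/
def terv : GPath V → Option V
  | .fin l => l.getLast?
  | .inf _ => none

/-- The edge set of a path. -/
def edges : GPath V → Set (V × V)
  | .fin l => {e | e ∈ l.zip l.tail}
  | .inf f => {e | ∃ n, e = (f n, f (n + 1))}

end GPath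

variable {V : Type*}

/-- `in[W]`: the set of initial vertices of the paths of `W`. -/
def warpIn (W : Set (GPath V)) : Set V := {v | ∃ P ∈ W, P.initv = some v}

/-- `ter[W]`: the set of terminal vertices of the finite paths of `W`. -/
def warpTer (W : Set (GPath V)) : Set V := {v | ∃ P ∈ W, P.terv = some v}

/-- `V[W]`: the set of vertices appearing on paths of `W`. -/
def warpVerts (W : Set (GPath V)) : Set V := {v | ∃ P ∈ W, v ∈ P.verts}

/-- `E[W]`: the set of edges appearing on paths of `W`. -/
def warpEdges (W : Set (GPath V)) : Set (V × V) := {e | ∃ P ∈ W, e ∈ P.edges}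

/-- A web `Γ = (D, A, B)`: a digraph together with vertex sets `A` and `B`,
such that no edge enters `A` and no edge leaves `B`. -/
structure Web (V : Type*) where
  Adj : V → V → Prop
  A : Set V
  B : Set V
  not_into_A : ∀ u v, Adj u v → v ∉ A
  not_from_B : ∀ u v, Adj u v → u ∉ B

namespace Web

variable (Γ : Web V)

/-- A warp: a set of pairwise vertex-disjoint paths of the web. -/
def IsWarp (W : Set (GPath V)) : Prop :=
  (∀ P ∈ W, P.IsPath Γ.Adj) ∧
    ∀ P ∈ W, ∀ Q ∈ W, P ≠ Q → ∀ v, v ∈ P.verts → v ∉ Q.verts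

/-- A wave: an `A`-starting warp `W` such that `ter[W]` is `A`–`B`-separating. -/
def IsWave (W : Set (GPath V)) : Prop :=
  Γ.IsWarp W ∧ warpIn W ⊆ Γ.A ∧ Separates Γ.Adj Γ.A Γ.B (warpTer W)

/-- A hindrance: a wave with `in[W] ≠ A`. -/
def IsHindrance (W : Set (GPath V)) : Prop :=
  Γ.IsWave W ∧ warpIn W ≠ Γ.A

/-- A web is hindered if it contains a hindrance. -/
def Hindered : Prop := ∃ W, Γ.IsHindrance W

/-- An `A`–`B`-warp: a set of pairwise disjoint finite `A`–`B` paths, each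
meeting `A ∪ B` only at its endpoints. -/
def IsABWarp (𝒲 : Set (List V)) : Prop :=
  (∀ p ∈ 𝒲, IsXYPath Γ.Adj Γ.A Γ.B p) ∧
    (∀ p ∈ 𝒲, ∀ v ∈ p, v ∈ Γ.A ∪ Γ.B → p.head? = some v ∨ p.getLast? = some v) ∧
    ∀ p ∈ 𝒲, ∀ q ∈ 𝒲, p ≠ q → ∀ v, v ∈ p → v ∉ q

/-- A linkage of `Γ`: an `A`–`B`-warp whose set of initial vertices is all of `A`. -/
def IsLinkage (𝒲 : Set (List V)) : Prop :=
  Γ.IsABWarp 𝒲 ∧ {v | ∃ p ∈ 𝒲, p.head? = some v} = Γ.A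

/-- A web is linkable if it has a linkage. -/
def Linkable : Prop := ∃ 𝒲, Γ.IsLinkage 𝒲

/-- The web `Γ − X` obtained by deleting the vertices of `X`. -/
def delete (X : Set V) : Web V where
  Adj u v := Γ.Adj u v ∧ u ∉ X ∧ v ∉ X
  A := Γ.A \ X
  B := Γ.B \ X
  not_into_A := fun u v h hv => Γ.not_into_A u v h.1 hv.1
  not_from_B := fun u v h hu => Γ.not_from_B u v h.1 hu.1

end Web

open Relation

/-! ### Waves as edge relations -/

/-- `Esc Γ S v`: some walk of `Γ` leads from `v` to `B` and avoids `S` altogether.  The set of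
vertices `v` with `¬ Esc Γ S v` is the set of vertices *roofed* by `S`. -/
inductive Esc (Γ : Web V) (S : Set V) : V → Prop
  | base {v : V} : v ∈ Γ.B → v ∉ S → Esc Γ S v
  | step {v w : V} : Γ.Adj v w → v ∉ S → Esc Γ S w → Esc Γ S v

/-- The vertices lying on the `N`-trajectories that start in `I`. -/
def Cov (N : V → V → Prop) (I : Set V) : Set V := {v | ∃ i ∈ I, ReflTransGen N i v}

/-- The end vertices of the finite `N`-trajectories that start in `I`. -/
def Ter (N : V → V → Prop) (I : Set V) : Set V := {v | v ∈ Cov N I ∧ ∀ x, ¬ N v x}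

/-- A wave, encoded by the set `I` of its initial vertices and its edge relation `N`: the paths of
the wave are the `N`-trajectories that start in `I`. -/
structure IsRW (Γ : Web V) (I : Set V) (N : V → V → Prop) : Prop where
  sub : I ⊆ Γ.A
  adj : ∀ {x y}, N x y → Γ.Adj x y
  func : ∀ {x y z}, N x y → N x z → y = z
  inj : ∀ {x y z}, N x z → N y z → x = y
  cov : ∀ {x y}, N x y → x ∈ Cov N I
  sep : ∀ x ∈ Γ.A, ¬ Esc Γ (Ter N I) x

/-- `Γ` is unhindered, in terms of the encoding `IsRW` of waves. -/
def Unh (Γ : Web V) : Prop := ∀ I N, IsRW Γ I N → I = Γ.A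

/-- `v` is roofed by the terminal vertices of some wave of `Γ`. -/
def Roofed (Γ : Web V) (v : V) : Prop := ∃ I N, IsRW Γ I N ∧ ¬ Esc Γ (Ter N I) v

lemma Cov.base {N : V → V → Prop} {I : Set V} {v : V} (h : v ∈ I) : v ∈ Cov N I :=
  ⟨v, h, .refl⟩

lemma Cov.step {N : V → V → Prop} {I : Set V} {v w : V} (h : v ∈ Cov N I) (e : N v w) :
    w ∈ Cov N I := by
  obtain ⟨i, hi, r⟩ := h
  exact ⟨i, hi, r.tail e⟩

lemma Cov.ind {N : V → V → Prop} {I : Set V} {P : V → Prop} (h0 : ∀ v ∈ I, P v)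
    (h1 : ∀ v w, v ∈ Cov N I → N v w → P v → P w) {v : V} (h : v ∈ Cov N I) : P v := by
  obtain ⟨i, hi, r⟩ := h
  induction r with
  | refl => exact h0 _ hi
  | tail r e ih => exact h1 _ _ ⟨i, hi, r⟩ e ih

lemma Cov.mono {N M : V → V → Prop} {I J : Set V} (h : I ⊆ J) (h' : ∀ x y, N x y → M x y) :
    Cov N I ⊆ Cov M J := by
  rintro v ⟨i, hi, r⟩
  exact ⟨i, h hi, ReflTransGen.mono h' _ _ r⟩

variable {Γ : Web V}

lemma Esc.not_mem {S : Set V} {v : V} (h : Esc Γ S v) : v ∉ S := by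
  cases h <;> assumption

lemma Esc.anti {S S' : Set V} (h : S ⊆ S') {v : V} (hv : Esc Γ S' v) : Esc Γ S v := by
  induction hv with
  | base hb hs => exact .base hb fun h' => hs (h h')
  | step e hs _ ih => exact .step e (fun h' => hs (h h')) ih

lemma Esc.trans {S S' : Set V} (h : ∀ s ∈ S, ¬ Esc Γ S' s) {v : V} (hv : Esc Γ S' v) :
    Esc Γ S v := by
  induction hv with
  | base hb hs => exact .base hb fun h' => h _ h' (.base hb hs)
  | step e hs hw ih => exact .step e (fun h' => h _ h' (.step e hs hw)) ih

/-- The vertices of a wave are roofed by its terminal vertices. -/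
lemma IsRW.cov_roof {I : Set V} {N : V → V → Prop} (h : IsRW Γ I N) {v : V} (hv : v ∈ Cov N I) :
    ¬ Esc Γ (Ter N I) v :=
  Cov.ind (P := fun v => ¬ Esc Γ (Ter N I) v) (fun v hv => h.sep v (h.sub hv))
    (fun _ _ _ e ih hw => ih (.step (h.adj e) (fun ht => ht.2 _ e) hw)) hv

/-- The wave `(I, N)` prolonged along the edges of the wave `(J, M)` outside the roof of
`(I, N)`. -/
def prolong (Γ : Web V) (I : Set V) (N M : V → V → Prop) : V → V → Prop :=
  fun x y => N x y ∨ (M x y ∧ Esc Γ (Ter N I) y)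

/-- The prolongation of a wave along another one is a wave that roofs what either of them
roofs. -/
lemma IsRW.combine {I J : Set V} {N M : V → V → Prop} (h : IsRW Γ I N) (h' : IsRW Γ J M) :
    IsRW Γ I (prolong Γ I N M) ∧ ∀ v, Esc Γ (Ter (prolong Γ I N M) I) v →
      Esc Γ (Ter N I) v ∧ Esc Γ (Ter M J) v := by
  have mono : Cov N I ⊆ Cov (prolong Γ I N M) I := Cov.mono le_rfl fun _ _ => .inl
  have tail : ∀ {x y}, M x y → Esc Γ (Ter N I) y → x ∉ Ter N I → Esc Γ (Ter N I) x :=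
    fun e hy hx => .step (h'.adj e) hx hy
  have key : ∀ v ∈ Cov M J, Esc Γ (Ter N I) v → v ∈ Cov (prolong Γ I N M) I := by
    intro v hv
    refine Cov.ind (P := fun v => Esc Γ (Ter N I) v → v ∈ Cov (prolong Γ I N M) I) ?_ ?_ hv
    · exact fun v hv hE => (h.sep v (h'.sub hv) hE).elim
    · intro v w _ e ih hE
      refine Cov.step ?_ (Or.inr ⟨e, hE⟩)
      by_cases hv : v ∈ Ter N I
      · exact mono hv.1
      · exact ih (tail e hE hv)
  have main : ∀ v, Esc Γ (Ter (prolong Γ I N M) I) v → Esc Γ (Ter N I) v ∧ Esc Γ (Ter M J) v := by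
    intro v hv
    induction hv with
    | @base v hb hs =>
      have no : ∀ x, ¬ prolong Γ I N M v x := by
        rintro x (e | e)
        · exact Γ.not_from_B _ _ (h.adj e) hb
        · exact Γ.not_from_B _ _ (h'.adj e.1) hb
      have h1 : Esc Γ (Ter N I) v := .base hb fun ht => hs ⟨mono ht.1, no⟩
      exact ⟨h1, .base hb fun ht => hs ⟨key v ht.1 h1, no⟩⟩
    | @step v w e hs _ ih =>
      have h1 : Esc Γ (Ter N I) v := by
        refine .step e (fun ht => ?_) ih.1
        have : ∃ x, prolong Γ I N M v x := by
          by_contra hno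
          exact hs ⟨mono ht.1, fun x hx => hno ⟨x, hx⟩⟩
        obtain ⟨x, hx | hx⟩ := this
        · exact ht.2 _ hx
        · exact h'.cov_roof (h'.cov hx.1) (.step e (fun ht' => ht'.2 _ hx.1) ih.2)
      refine ⟨h1, .step e (fun ht => hs ⟨key v ht.1 h1, ?_⟩) ih.2⟩
      rintro x (hx | hx)
      · exact h.cov_roof (h.cov hx) h1
      · exact ht.2 _ hx.1
  refine ⟨⟨h.sub, ?_, ?_, ?_, ?_, fun x hx hE => h.sep x hx (main x hE).1⟩, main⟩
  · rintro x y (e | e)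
    exacts [h.adj e, h'.adj e.1]
  · have aux : ∀ {x y z}, N x y → M x z → Esc Γ (Ter N I) z → False := fun e e' hz =>
      h.cov_roof (h.cov e) (tail e' hz fun ht => ht.2 _ e)
    rintro x y z (e | e) (e' | e')
    · exact h.func e e'
    · exact (aux e e'.1 e'.2).elim
    · exact (aux e' e.1 e.2).elim
    · exact h'.func e.1 e'.1
  · rintro x y z (e | e) (e' | e')
    · exact h.inj e e'
    · exact (h.cov_roof (Cov.step (h.cov e) e) e'.2).elim
    · exact (h.cov_roof (Cov.step (h.cov e') e') e.2).elim
    · exact h'.inj e.1 e'.1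
  · rintro x y (e | e)
    · exact mono (h.cov e)
    · by_cases hx : x ∈ Ter N I
      · exact mono hx.1
      · exact key x (h'.cov e.1) (tail e.1 e.2 hx)

/-- The wave of trivial paths. -/
lemma isRW_trivial (Γ : Web V) : IsRW Γ Γ.A (fun _ _ => False) where
  sub := le_rfl
  adj := False.elim
  func h := h.elim
  inj h := h.elim
  cov h := h.elim
  sep _ hx h := h.not_mem ⟨Cov.base hx, fun _ => id⟩

/-- There is a wave which roofs every vertex roofed by any wave. -/
lemma exists_max_wave (Γ : Web V) :
    ∃ I N, IsRW Γ I N ∧ ∀ v, Roofed Γ v → ¬ Esc Γ (Ter N I) v := by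
  have key0 : ∀ c ⊆ {p : Set V × (V → V → Prop) | IsRW Γ p.1 p.2}, IsChain (· ≤ ·) c → ∀ y ∈ c,
      ∃ ub ∈ {p : Set V × (V → V → Prop) | IsRW Γ p.1 p.2}, ∀ z ∈ c, z ≤ ub := by
    intro c hc hchain p0 hp0
    have tot : ∀ p ∈ c, ∀ q ∈ c, ∃ r ∈ c, p ≤ r ∧ q ≤ r := by
      intro p hp q hq
      rcases hchain.total hp hq with h | h
      exacts [⟨q, hq, h, le_rfl⟩, ⟨p, hp, le_rfl, h⟩]
    let I : Set V := {v | ∃ p ∈ c, v ∈ p.1}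
    let N : V → V → Prop := fun x y => ∃ p ∈ c, p.2 x y
    have mono : ∀ p ∈ c, Cov p.2 p.1 ⊆ Cov N I := fun p hp =>
      Cov.mono (fun v hv => ⟨p, hp, hv⟩) fun x y e => ⟨p, hp, e⟩
    have key : ∀ v, Esc Γ (Ter N I) v →
        ∃ j ∈ c, ∀ i ∈ c, j ≤ i → Esc Γ (Ter i.2 i.1) v := by
      intro v hv
      induction hv with
      | @base v hb hs =>
        refine ⟨p0, hp0, fun i hi _ => .base hb fun ht => hs ⟨mono i hi ht.1, ?_⟩⟩
        rintro x ⟨q, hq, e⟩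
        exact Γ.not_from_B _ _ ((hc hq).adj e) hb
      | @step v w e hs _ ih =>
        obtain ⟨j, hj, hji⟩ := ih
        by_cases hv : v ∈ Cov N I
        · have : ∃ x, N v x := by
            by_contra hno
            exact hs ⟨hv, fun x hx => hno ⟨x, hx⟩⟩
          obtain ⟨x, k, hk, hx⟩ := this
          obtain ⟨r, hr, h1, h2⟩ := tot j hj k hk
          refine ⟨r, hr, fun i hi hri => .step e ?_ (hji i hi (h1.trans hri))⟩
          exact fun ht => ht.2 x ((h2.trans hri).2 _ _ hx)
        · exact ⟨j, hj, fun i hi hle =>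
            .step e (fun ht => hv (mono i hi ht.1)) (hji i hi hle)⟩
    refine ⟨(I, N), ⟨?_, ?_, ?_, ?_, ?_, ?_⟩, fun p hp =>
      ⟨fun v hv => ⟨p, hp, hv⟩, fun x y e => ⟨p, hp, e⟩⟩⟩
    · rintro v ⟨p, hp, hv⟩
      exact (hc hp).sub hv
    · rintro x y ⟨p, hp, e⟩
      exact (hc hp).adj e
    · rintro x y z ⟨p, hp, e⟩ ⟨q, hq, e'⟩
      obtain ⟨r, hr, h1, h2⟩ := tot p hp q hq
      exact (hc hr).func (h1.2 _ _ e) (h2.2 _ _ e')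
    · rintro x y z ⟨p, hp, e⟩ ⟨q, hq, e'⟩
      obtain ⟨r, hr, h1, h2⟩ := tot p hp q hq
      exact (hc hr).inj (h1.2 _ _ e) (h2.2 _ _ e')
    · rintro x y ⟨p, hp, e⟩
      exact mono p hp ((hc hp).cov e)
    · intro x hx hE
      obtain ⟨j, hj, hji⟩ := key x hE
      exact (hc hj).sep x hx (hji j hj le_rfl)
  obtain ⟨⟨I, N⟩, -, hmax⟩ := zorn_le_nonempty₀ {p : Set V × (V → V → Prop) | IsRW Γ p.1 p.2} key0
    (Γ.A, fun _ _ => False) (isRW_trivial Γ)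
  refine ⟨I, N, hmax.1, ?_⟩
  rintro v ⟨J, M, hJ, hv⟩ hE
  obtain ⟨h1, h2⟩ := hmax.1.combine hJ
  have hle := hmax.2 (y := (I, prolong Γ I N M)) h1 ⟨le_rfl, fun x y => Or.inl⟩
  have : prolong Γ I N M = N := le_antisymm hle.2 fun x y => Or.inl
  rw [this] at h2
  exact hv (h2 v hE).2

/-! ### Deleting vertices -/

lemma Esc.del_mono {S X Y : Set V} (h : Y ⊆ X) {v : V} (hv : Esc (Γ.delete X) S v) :
    Esc (Γ.delete Y) S v := by
  induction hv with
  | base hb hs => exact .base ⟨hb.1, fun hy => hb.2 (h hy)⟩ hs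
  | step e hs _ ih =>
    exact .step ⟨e.1, fun hy => e.2.1 (h hy), fun hy => e.2.2 (h hy)⟩ hs ih

lemma Esc.not_del {S X : Set V} {v : V} (hv : Esc (Γ.delete X) S v) : v ∉ X := by
  cases hv with
  | base hb _ => exact hb.2
  | step e _ _ => exact e.2.1

lemma web_ext {Γ Δ : Web V} (h : Γ.Adj = Δ.Adj) (hA : Γ.A = Δ.A) (hB : Γ.B = Δ.B) : Γ = Δ := by
  cases Γ; cases Δ; simp_all

lemma delete_delete (Γ : Web V) (X Y : Set V) : (Γ.delete X).delete Y = Γ.delete (X ∪ Y) := by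
  apply web_ext
  · funext u v
    simp only [Web.delete, Set.mem_union, eq_iff_iff]
    tauto
  · simp [Web.delete, Set.sdiff_sdiff]
  · simp [Web.delete, Set.sdiff_sdiff]

lemma delete_empty (Γ : Web V) : Γ.delete ∅ = Γ := by
  apply web_ext <;> simp [Web.delete]

/-- The vertices of a wave of `Γ − X` avoid `X`. -/
lemma IsRW.cov_not_del {X I : Set V} {N : V → V → Prop} (h : IsRW (Γ.delete X) I N) {v : V}
    (hv : v ∈ Cov N I) : v ∉ X :=
  Cov.ind (P := fun v => v ∉ X) (fun _ hv => (h.sub hv).2) (fun _ _ _ e _ => (h.adj e).2.2) hv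

/-- A wave of `Γ − Y` is a wave of `Γ − X` when none of the additional vertices is roofed. -/
lemma IsRW.up {X Y I : Set V} {N : V → V → Prop} (h : IsRW (Γ.delete Y) I N) (hYX : Y ⊆ X)
    (hX : ∀ x ∈ X, x ∉ Y → Esc (Γ.delete Y) (Ter N I) x) : IsRW (Γ.delete X) I N := by
  have out : ∀ v ∈ Cov N I, v ∉ X := fun v hv hvX =>
    h.cov_roof hv (hX v hvX (h.cov_not_del hv))
  exact ⟨fun v hv => ⟨(h.sub hv).1, out v (.base hv)⟩,
    fun e => ⟨(h.adj e).1, out _ (h.cov e), out _ (Cov.step (h.cov e) e)⟩, h.func, h.inj, h.cov,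
    fun x hx hE => h.sep x ⟨hx.1, fun hy => hx.2 (hYX hy)⟩ (hE.del_mono hYX)⟩

/-- A wave of `Γ − X` is a wave of `Γ − Y`, `Y ⊆ X`, when its terminal vertices roof in `Γ − Y`
the vertices of `X` and whatever they roof in `Γ − X`. -/
lemma IsRW.down {X Y I : Set V} {N : V → V → Prop} (h : IsRW (Γ.delete X) I N) (hYX : Y ⊆ X)
    (hE : ∀ v, Esc (Γ.delete Y) (Ter N I) v → Esc (Γ.delete X) (Ter N I) v) :
    IsRW (Γ.delete Y) I N :=
  ⟨fun _ hv => ⟨(h.sub hv).1, fun hy => (h.sub hv).2 (hYX hy)⟩,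
    fun e => ⟨(h.adj e).1, fun hy => (h.adj e).2.1 (hYX hy), fun hy => (h.adj e).2.2 (hYX hy)⟩,
    h.func, h.inj, h.cov,
    fun x hx hx' => h.sep x ⟨hx.1, (hE x hx').not_del⟩ (hE x hx')⟩

lemma Unh.delete_mem {a : V} (h : Unh Γ) (ha : a ∈ Γ.A) : Unh (Γ.delete {a}) := by
  intro I N hI
  have haI : a ∉ I := fun h' => (hI.sub h').2 rfl
  have haN : ∀ x, ¬ N a x := fun x e => (hI.adj e).2.1 rfl
  have sub : insert a (Ter N I) ⊆ Ter N (insert a I) := by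
    rintro v (rfl | hv)
    · exact ⟨Cov.base (.inl rfl), haN⟩
    · exact ⟨Cov.mono (Set.subset_insert _ _) (fun _ _ => id) hv.1, hv.2⟩
  have esc : ∀ v, Esc Γ (Ter N (insert a I)) v → Esc (Γ.delete {a}) (Ter N I) v := by
    intro v hv
    induction hv with
    | base hb hs =>
      exact .base ⟨hb, fun h' => hs (sub (.inl h'))⟩ fun h' => hs (sub (.inr h'))
    | step e hs _ ih =>
      exact .step ⟨e, fun h' => hs (sub (.inl h')), ih.not_del⟩ (fun h' => hs (sub (.inr h'))) ih
  have := h (insert a I) N ⟨Set.insert_subset ha fun v hv => (hI.sub hv).1,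
    fun e => (hI.adj e).1, hI.func, hI.inj,
    fun e => Cov.mono (Set.subset_insert _ _) (fun _ _ => id) (hI.cov e),
    fun x hx hE => hI.sep x ⟨hx, (esc x hE).not_del⟩ (esc x hE)⟩
  ext v
  simp only [Web.delete, ← this, Set.mem_sdiff, Set.mem_insert_iff, Set.mem_singleton_iff]
  constructor
  · exact fun hv => ⟨.inr hv, fun h' => haI (h' ▸ hv)⟩
  · rintro ⟨hv | hv, hne⟩
    exacts [(hne hv).elim, hv]

/-! ### The exchange lemma -/

lemma cov_restrict (N : V → V → Prop) (I : Set V) :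
    Cov (fun x y => N x y ∧ x ∈ Cov N I) I = Cov N I := by
  apply le_antisymm (Cov.mono le_rfl fun _ _ => And.left)
  intro v hv
  exact Cov.ind (P := fun v => v ∈ Cov (fun x y => N x y ∧ x ∈ Cov N I) I) (fun _ => Cov.base)
    (fun _ _ hv e ih => Cov.step ih ⟨e, hv⟩) hv

/-- A family of trajectories from `A` which contains a set `S` roofing `A` among its end vertices
gives a wave once the edges lying on no trajectory are discarded. -/
lemma isRW_of_raw {Λ : Web V} {I S : Set V} {N : V → V → Prop} (hI : I ⊆ Λ.A)
    (adj : ∀ {x y}, N x y → Λ.Adj x y) (func : ∀ {x y z}, N x y → N x z → y = z)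
    (inj : ∀ {x y z}, N x z → N y z → x = y) (hS : S ⊆ Cov N I) (out : ∀ s ∈ S, ∀ x, ¬ N s x)
    (sep : ∀ x ∈ Λ.A, ¬ Esc Λ S x) : ∃ I N, IsRW Λ I N ∧ S ⊆ Ter N I := by
  have hcov := cov_restrict N I
  have hT : S ⊆ Ter (fun x y => N x y ∧ x ∈ Cov N I) I := fun s hs =>
    ⟨hcov.ge (hS hs), fun x e => out s hs x e.1⟩
  exact ⟨I, _, ⟨hI, fun e => adj e.1, fun e e' => func e.1 e'.1, fun e e' => inj e.1 e'.1,
    fun e => hcov.ge e.2, fun x hx hE => sep x hx (hE.anti hT)⟩, hT⟩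

/-- A family of disjoint trajectories, all but one of which start in `I ⊆ A`; the exceptional one
starts at `u ∉ A`.  The vertices of `S` are end vertices of trajectories. -/
structure Cfg (Λ : Web V) (I S : Set V) (N : V → V → Prop) (u : V) : Prop where
  adj : ∀ {x y}, N x y → Λ.Adj x y
  func : ∀ {x y z}, N x y → N x z → y = z
  inj : ∀ {x y z}, N x z → N y z → x = y
  cov : ∀ {x y}, N x y → x ∈ Cov N (insert u I)
  root : ∀ x, ¬ N x u
  hu : u ∉ Λ.A
  sub : S ⊆ Cov N (insert u I)
  out : ∀ s ∈ S, ∀ x, ¬ N s x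

/-- The relation `N` without the edges that leave `w`. -/
def cut (N : V → V → Prop) (w : V) : V → V → Prop := fun p q => N p q ∧ p ≠ w

/-- The relation `N` with the edge `(w, u)` added. -/
def withEdge (N : V → V → Prop) (w u : V) : V → V → Prop := fun p q => N p q ∨ (p = w ∧ q = u)

/-- The pairs (trajectories, exceptional start) obtained from `(N₀, u₀)` by augmentation steps:
lengthening the exceptional trajectory backwards, rerouting another trajectory into it, or moving
its start forward. -/
inductive Reach (Λ : Web V) (I : Set V) (N₀ : V → V → Prop) (u₀ : V) :
    (V → V → Prop) → V → Prop
  | start : Reach Λ I N₀ u₀ N₀ u₀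
  | back {N : V → V → Prop} {u w : V} : Reach Λ I N₀ u₀ N u → Λ.Adj w u → w ∉ Λ.A →
      w ∉ Cov N (insert u I) → Reach Λ I N₀ u₀ (withEdge N w u) w
  | reroute {N : V → V → Prop} {u w x : V} : Reach Λ I N₀ u₀ N u → Λ.Adj w u → w ∈ Cov N I →
      N w x → Reach Λ I N₀ u₀ (withEdge (cut N w) w u) x
  | fwd {N : V → V → Prop} {u v : V} : Reach Λ I N₀ u₀ N u → N u v →
      Reach Λ I N₀ u₀ (cut N u) v

section Cfg
variable {Λ : Web V} {I S : Set V} {N : V → V → Prop} {u : V}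

lemma Cov.withEdge_mono {J K : Set V} {w : V} (h : J ⊆ Cov (withEdge N w u) K) :
    Cov N J ⊆ Cov (withEdge N w u) K := fun _ hv =>
  Cov.ind (P := fun v => v ∈ Cov (withEdge N w u) K) h (fun _ _ _ e ih => Cov.step ih (.inl e)) hv

lemma Cfg.back (h : Cfg Λ I S N u) {w : V} (e : Λ.Adj w u) (hw : w ∉ Λ.A)
    (hc : w ∉ Cov N (insert u I)) : Cfg Λ I S (withEdge N w u) w := by
  have hm : Cov N (insert u I) ⊆ Cov (withEdge N w u) (insert w I) := by
    apply Cov.withEdge_mono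
    rintro v (rfl | hv)
    · exact Cov.step (Cov.base (.inl rfl)) (.inr ⟨rfl, rfl⟩)
    · exact Cov.base (.inr hv)
  refine ⟨?_, ?_, ?_, ?_, ?_, hw, fun s hs => hm (h.sub hs), ?_⟩
  · rintro x y (h1 | ⟨rfl, rfl⟩)
    exacts [h.adj h1, e]
  · rintro x y z (h1 | ⟨rfl, rfl⟩) (h2 | ⟨h3, rfl⟩)
    · exact h.func h1 h2
    · exact (hc (h3 ▸ h.cov h1)).elim
    · exact (hc (h.cov h2)).elim
    · rfl
  · rintro x y z (h1 | ⟨rfl, rfl⟩) (h2 | ⟨rfl, h3⟩)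
    · exact h.inj h1 h2
    · exact (h.root x (h3 ▸ h1)).elim
    · exact (h.root y h2).elim
    · rfl
  · rintro x y (h1 | ⟨rfl, rfl⟩)
    · exact hm (h.cov h1)
    · exact Cov.base (.inl rfl)
  · rintro x (h1 | ⟨-, rfl⟩)
    · exact hc (Cov.step (h.cov h1) h1)
    · exact hc (Cov.base (.inl rfl))
  · rintro s hs x (h1 | ⟨rfl, -⟩)
    · exact h.out s hs x h1
    · exact hc (h.sub hs)

lemma cut_reach {i w : V} (h : ReflTransGen N i w) : ReflTransGen (cut N w) i w := by
  induction h using ReflTransGen.head_induction_on with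
  | refl => exact .refl
  | @head a b e _ ih =>
    by_cases ha : a = w
    · rw [ha]
    · exact .head ⟨e, ha⟩ ih

lemma Cfg.reroute (h : Cfg Λ I S N u) {w x : V} (e : Λ.Adj w u) (hw : w ∈ Cov N I)
    (hx : N w x) : Cfg Λ I S (withEdge (cut N w) w u) x := by
  have hw' : w ∈ Cov (withEdge (cut N w) w u) (insert x I) := by
    obtain ⟨i, hi, r⟩ := hw
    exact ⟨i, .inr hi, ReflTransGen.mono (fun _ _ => Or.inl) _ _ (cut_reach r)⟩
  have hm : Cov N (insert u I) ⊆ Cov (withEdge (cut N w) w u) (insert x I) := by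
    intro v hv
    refine Cov.ind (P := fun v => v ∈ Cov (withEdge (cut N w) w u) (insert x I)) ?_ ?_ hv
    · rintro v (rfl | hv)
      · exact Cov.step hw' (.inr ⟨rfl, rfl⟩)
      · exact Cov.base (.inr hv)
    · intro p q _ e' ih
      by_cases hp : p = w
      · subst hp
        exact Cov.base (.inl (h.func e' hx))
      · exact Cov.step ih (.inl ⟨e', hp⟩)
  refine ⟨?_, ?_, ?_, ?_, ?_, Λ.not_into_A _ _ (h.adj hx), fun s hs => hm (h.sub hs), ?_⟩
  · rintro x y (h1 | ⟨rfl, rfl⟩)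
    exacts [h.adj h1.1, e]
  · rintro x y z (h1 | ⟨rfl, rfl⟩) (h2 | ⟨h3, rfl⟩)
    · exact h.func h1.1 h2.1
    · exact (h1.2 h3).elim
    · exact (h2.2 rfl).elim
    · rfl
  · rintro x y z (h1 | ⟨rfl, rfl⟩) (h2 | ⟨rfl, h3⟩)
    · exact h.inj h1.1 h2.1
    · exact (h.root x (h3 ▸ h1.1)).elim
    · exact (h.root y h2.1).elim
    · rfl
  · rintro x y (h1 | ⟨rfl, rfl⟩)
    · exact hm (h.cov h1.1)
    · exact hw'
  · rintro p (h1 | ⟨rfl, rfl⟩)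
    · exact h1.2 (h.inj h1.1 hx)
    · exact h.root _ hx
  · rintro s hs y (h1 | ⟨rfl, -⟩)
    · exact h.out s hs y h1.1
    · exact h.out _ hs _ hx

lemma Cfg.fwd (h : Cfg Λ I S N u) {v : V} (e : N u v) : Cfg Λ I S (cut N u) v := by
  have hm : ∀ p ∈ Cov N (insert u I), p ≠ u → p ∈ Cov (cut N u) (insert v I) := by
    intro p hp
    refine Cov.ind (P := fun p => p ≠ u → p ∈ Cov (cut N u) (insert v I)) ?_ ?_ hp
    · rintro p (rfl | hp) hne
      · exact (hne rfl).elim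
      · exact Cov.base (.inr hp)
    · intro p q _ e' ih _
      by_cases hp : p = u
      · subst hp
        exact Cov.base (.inl (h.func e' e))
      · exact Cov.step (ih hp) ⟨e', hp⟩
  exact ⟨fun h1 => h.adj h1.1, fun h1 h2 => h.func h1.1 h2.1, fun h1 h2 => h.inj h1.1 h2.1,
    fun h1 => hm _ (h.cov h1.1) h1.2, fun x h1 => h1.2 (h.inj h1.1 e),
    Λ.not_into_A _ _ (h.adj e), fun s hs => hm s (h.sub hs) fun hsu => h.out s hs v (hsu ▸ e),
    fun s hs x h1 => h.out s hs x h1.1⟩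

/-- An edge from an `A`-starting trajectory's end, or from a fresh vertex of `A`, to the
exceptional start completes the configuration to a wave. -/
lemma Cfg.finish (h : Cfg Λ I S N u) {J : Set V} (hJ : J ⊆ Λ.A) (hIJ : I ⊆ J) {w : V}
    (e : Λ.Adj w u) (hw : w ∈ Cov N J) (hno : ∀ x, ¬ N w x) (hwS : w ∉ S)
    (sep : ∀ x ∈ Λ.A, ¬ Esc Λ S x) : ∃ I N, IsRW Λ I N ∧ S ⊆ Ter N I := by
  refine isRW_of_raw (N := withEdge N w u) hJ ?_ ?_ ?_ ?_ ?_ sep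
  · rintro x y (h1 | ⟨rfl, rfl⟩)
    exacts [h.adj h1, e]
  · rintro x y z (h1 | ⟨rfl, rfl⟩) (h2 | ⟨h3, rfl⟩)
    · exact h.func h1 h2
    · exact (hno y (h3 ▸ h1)).elim
    · exact (hno z h2).elim
    · rfl
  · rintro x y z (h1 | ⟨rfl, rfl⟩) (h2 | ⟨rfl, h3⟩)
    · exact h.inj h1 h2
    · exact (h.root x (h3 ▸ h1)).elim
    · exact (h.root y h2).elim
    · rfl
  · refine fun s hs => Cov.withEdge_mono ?_ (h.sub hs)
    rintro v (rfl | hv)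
    · exact Cov.step (Cov.withEdge_mono (fun v hv => Cov.base hv) hw) (.inr ⟨rfl, rfl⟩)
    · exact Cov.base (hIJ hv)
  · rintro s hs x (h1 | ⟨rfl, -⟩)
    exacts [h.out s hs x h1, hwS hs]

end Cfg

/-- Augmenting-walk lemma.  Suppose that, in an unhindered web, disjoint trajectories start in a
proper subset of `A` and in one additional vertex `u₀ ∉ A`, and that their end vertices roof `A`.
Then some wave contains all of these end vertices among its own.

If augmentation never succeeds, then cutting the trajectories at the set of exceptional starts
that can be reached yields a hindrance. -/
lemma exchange {Λ : Web V} (hU : Unh Λ) {I₀ : Set V} {N₀ : V → V → Prop} {u₀ : V}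
    (hI : I₀ ⊆ Λ.A) (hu : u₀ ∉ Λ.A) (adj : ∀ {x y}, N₀ x y → Λ.Adj x y)
    (func : ∀ {x y z}, N₀ x y → N₀ x z → y = z) (inj : ∀ {x y z}, N₀ x z → N₀ y z → x = y)
    (cov : ∀ {x y}, N₀ x y → x ∈ Cov N₀ (insert u₀ I₀)) (root : ∀ x, ¬ N₀ x u₀)
    (sep : ∀ x ∈ Λ.A, ¬ Esc Λ (Ter N₀ (insert u₀ I₀)) x) {a₀ : V} (ha : a₀ ∈ Λ.A)
    (ha' : a₀ ∉ I₀) : ∃ I N, IsRW Λ I N ∧ Ter N₀ (insert u₀ I₀) ⊆ Ter N I := by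
  by_contra hfail
  set S := Ter N₀ (insert u₀ I₀) with hS
  have cfg : ∀ {N u}, Reach Λ I₀ N₀ u₀ N u → Cfg Λ I₀ S N u := by
    intro N u h
    induction h with
    | start => exact ⟨adj, func, inj, cov, root, hu, fun s hs => hs.1, fun s hs => hs.2⟩
    | back _ e hw hc ih => exact ih.back e hw hc
    | reroute _ e hw hx ih => exact ih.reroute e hw hx
    | fwd _ e ih => exact ih.fwd e
  let R : Set V := {u | ∃ N, Reach Λ I₀ N₀ u₀ N u}
  -- The edges of `N₀` missing from a reachable configuration have their heads in `R`.
  have inv1 : ∀ {N u}, Reach Λ I₀ N₀ u₀ N u → ∀ w v, N₀ w v → N w v ∨ v ∈ R := by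
    intro N u h
    induction h with
    | start => exact fun w v e => .inl e
    | back _ _ _ _ ih =>
      intro w v e
      exact (ih w v e).imp_left .inl
    | @reroute N u p x h1 e' hw hx ih =>
      intro w v e
      rcases ih w v e with h2 | h2
      · by_cases hwp : w = p
        · subst hwp
          exact .inr ⟨_, (cfg h1).func hx h2 ▸ Reach.reroute h1 e' hw hx⟩
        · exact .inl (.inl ⟨h2, hwp⟩)
      · exact .inr h2
    | @fwd N u y h1 e' ih =>
      intro w v e
      rcases ih w v e with h2 | h2
      · by_cases hwp : w = u
        · subst hwp
          exact .inr ⟨_, (cfg h1).func e' h2 ▸ Reach.fwd h1 e'⟩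
        · exact .inl ⟨h2, hwp⟩
      · exact .inr h2
  -- A tail of a new edge lies in `R`, or its `N₀`-edge has its head in `R`.
  have inv2 : ∀ {N u}, Reach Λ I₀ N₀ u₀ N u → ∀ w x, N w x →
      N₀ w x ∨ w ∈ R ∨ ∃ v, N₀ w v ∧ v ∈ R := by
    intro N u h
    induction h with
    | start => exact fun w v e => .inl e
    | back h1 e' hw hc ih =>
      rintro w x (e | ⟨rfl, rfl⟩)
      · exact ih w x e
      · exact .inr (.inl ⟨_, Reach.back h1 e' hw hc⟩)
    | @reroute N u p y h1 e' hw hx ih =>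
      rintro w x (e | ⟨rfl, rfl⟩)
      · exact ih w x e.1
      · rcases ih _ _ hx with h2 | h2
        · exact .inr (.inr ⟨_, h2, _, Reach.reroute h1 e' hw hx⟩)
        · exact .inr h2
    | fwd h1 e' ih => exact fun w x e => ih w x e.1
  have closed0 : ∀ v ∈ R, ∀ y, N₀ v y → y ∈ R := by
    rintro v ⟨N, hN⟩ y e
    rcases inv1 hN v y e with h | h
    exacts [⟨_, hN.fwd h⟩, h]
  have closed : ∀ {N u v}, Reach Λ I₀ N₀ u₀ N u → ReflTransGen N u v → v ∈ R := by
    intro N u v h r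
    have gen : ∀ N', Reach Λ I₀ N₀ u₀ N' u →
        (∀ p q, ReflTransGen N u p → N p q → N' p q) → v ∈ R := by
      clear h
      induction r using ReflTransGen.head_induction_on with
      | refl => exact fun N' h _ => ⟨N', h⟩
      | @head x y e _ ih =>
        intro N' h hag
        have e' := hag x y .refl e
        refine ih _ (h.fwd e') fun p q hp hpq => ⟨hag p q (.head e hp) hpq, ?_⟩
        -- An `N`-cycle through `x` would give an `N'`-edge into the exceptional start `x`.
        rintro rfl
        cases hp with
        | refl => exact (cfg h).root _ e'
        | tail r1 e1 => exact (cfg h).root _ (hag _ _ (.head e r1) e1)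
    exact gen N h fun p q _ => id
  let N1 : V → V → Prop := fun x y => N₀ x y ∧ y ∉ R
  have cov1 : ∀ v ∈ Cov N₀ (insert u₀ I₀), v ∉ R → v ∈ Cov N1 I₀ := by
    intro v hv
    refine Cov.ind (P := fun v => v ∉ R → v ∈ Cov N1 I₀) ?_ ?_ hv
    · rintro v (rfl | hv) hR
      · exact (hR ⟨_, .start⟩).elim
      · exact Cov.base hv
    · intro p q _ e ih hq
      exact Cov.step (ih fun hp => hq (closed0 p hp q e)) ⟨e, hq⟩
  have escape : ∀ v, Esc Λ (Ter N1 I₀) v → v ∉ R → Esc Λ S v := by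
    intro v hv
    induction hv with
    | base hb hs =>
      exact fun hR => .base hb fun h => hs ⟨cov1 _ h.1 hR, fun x e => h.2 x e.1⟩
    | @step v w e hs _ ih =>
      intro hR
      have hvS : v ∉ S := fun h => hs ⟨cov1 _ h.1 hR, fun x e => h.2 x e.1⟩
      by_cases hw : w ∈ R
      · exfalso
        obtain ⟨N, hN⟩ := hw
        have c := cfg hN
        by_cases hc : v ∈ Cov N (insert w I₀)
        · obtain ⟨i, rfl | hi, r⟩ := hc
          · exact hR (closed hN r)
          · have hvI : v ∈ Cov N I₀ := ⟨i, hi, r⟩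
            by_cases hx : ∃ x, N v x
            · obtain ⟨x, hx⟩ := hx
              have hxR : x ∈ R := ⟨_, Reach.reroute hN e hvI hx⟩
              have : ∃ y, N₀ v y ∧ y ∈ R := by
                rcases inv2 hN v x hx with h | h | h
                exacts [⟨x, h, hxR⟩, (hR h).elim, h]
              obtain ⟨y, hy, hyR⟩ := this
              exact hs ⟨cov1 v (cov hy) hR, fun z hz => hz.2 (func hy hz.1 ▸ hyR)⟩
            · exact hfail (c.finish hI le_rfl e hvI (fun x h => hx ⟨x, h⟩) hvS sep)
        · by_cases hA : v ∈ Λ.A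
          · exact hfail (c.finish (J := insert v I₀) (Set.insert_subset hA hI)
              (Set.subset_insert _ _) e (Cov.base (.inl rfl)) (fun x h => hc (c.cov h)) hvS sep)
          · exact hR ⟨_, Reach.back hN e hA hc⟩
      · exact .step e hvS (ih hw)
  have hAR : ∀ x ∈ Λ.A, x ∉ R := fun x hx ⟨_, hN⟩ => (cfg hN).hu hx
  have := hU I₀ N1 ⟨hI, fun e => adj e.1, fun e e' => func e.1 e'.1, fun e e' => inj e.1 e'.1,
    fun {x y} e => cov1 x (cov e.1) fun hx => e.2 (closed0 x hx y e.1),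
    fun x hx hE => sep x hx (escape x hE (hAR x hx))⟩
  exact ha' (this ▸ ha)

/-! ### Deleting one vertex -/

section Trajectories
variable {Γ : Web V} {I : Set V} {N : V → V → Prop}

lemma IsRW.start_unique (h : IsRW Γ I N) {i j x : V} (hi : i ∈ Γ.A) (hj : j ∈ Γ.A)
    (r : ReflTransGen N i x) (r' : ReflTransGen N j x) : i = j := by
  have aux : ∀ {i j : V}, j ∈ Γ.A → ReflTransGen N i j → i = j := by
    intro i j hj r
    cases r with
    | refl => rfl
    | tail _ e => exact (Γ.not_into_A _ _ (h.adj e) hj).elim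
  have tot := ReflTransGen.total_of_right_unique (r := Function.swap N)
    (fun _ _ _ e e' => h.inj e e') (reflTransGen_swap.2 r) (reflTransGen_swap.2 r')
  rcases tot with t | t
  · exact (aux hi (reflTransGen_swap.1 t)).symm
  · exact aux hj (reflTransGen_swap.1 t)

lemma IsRW.acyclic (h : IsRW Γ I N) (x : V) : ¬ TransGen N x x := by
  intro hx
  obtain ⟨y, e, -⟩ := TransGen.head'_iff.1 hx
  refine Cov.ind (P := fun x => ¬ TransGen N x x) ?_ ?_ (h.cov e) hx
  · intro i hi ht
    obtain ⟨z, -, e⟩ := TransGen.tail'_iff.1 ht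
    exact Γ.not_into_A _ _ (h.adj e) (h.sub hi)
  · intro p q _ e ih ht
    obtain ⟨z, r, e'⟩ := TransGen.tail'_iff.1 ht
    obtain rfl := h.inj e e'
    exact ih (TransGen.head' e r)

lemma IsRW.ter_unique (h : IsRW Γ I N) {i x t : V} (r : ReflTransGen N i x)
    (r' : ReflTransGen N i t) (hx : ∀ y, ¬ N x y) : ReflTransGen N t x := by
  rcases ReflTransGen.total_of_right_unique (r := N) (fun _ _ _ e e' => h.func e e') r r' with s | s
  · rcases ReflTransGen.cases_head s with rfl | ⟨y, e, -⟩
    exacts [.refl, (hx y e).elim]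
  · exact s

end Trajectories

lemma Esc.of_del {Γ : Web V} {S S' X : Set V} (h : ∀ v ∈ S, v ∉ X → v ∈ S') {v : V}
    (hv : Esc (Γ.delete X) S' v) : Esc Γ S v := by
  induction hv with
  | base hb hs => exact .base hb.1 fun h' => hs (h _ h' hb.2)
  | step e hs _ ih => exact .step e.1 (fun h' => hs (h _ h' e.2.1)) ih

lemma Esc.to_del {Γ : Web V} {S S' X : Set V} (h : S ⊆ S') (hX : X ⊆ S') {v : V}
    (hv : Esc Γ S' v) : Esc (Γ.delete X) S v := by
  induction hv with
  | base hb hs => exact .base ⟨hb, fun h' => hs (hX h')⟩ fun h' => hs (h h')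
  | step e hs hw ih =>
    exact .step ⟨e, fun h' => hs (hX h'), fun h' => hw.not_mem (hX h')⟩ (fun h' => hs (h h')) ih

/-- If deleting `y` makes an unhindered web hindered, then a wave roofs `y`. -/
lemma roofed_of_hindered {Γ : Web V} (hU : Unh Γ) {y : V} (hy : y ∉ Γ.A)
    (h : ¬ Unh (Γ.delete {y})) : Roofed Γ y := by
  simp only [Unh, not_forall] at h
  obtain ⟨I, N, hI, hne⟩ := h
  have : ∃ a ∈ (Γ.delete {y}).A, a ∉ I := by
    by_contra! hc
    exact hne (le_antisymm hI.sub hc)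
  obtain ⟨a, ha, haI⟩ := this
  have hm : Cov N I ⊆ Cov N (insert y I) := Cov.mono (Set.subset_insert _ _) fun _ _ => id
  have hyT : y ∈ Ter N (insert y I) := ⟨Cov.base (.inl rfl), fun x e => (hI.adj e).2.1 rfl⟩
  obtain ⟨J, M, hJ, hT⟩ := exchange hU (I₀ := I) (N₀ := N) (u₀ := y)
    (fun v hv => (hI.sub hv).1) hy (fun e => (hI.adj e).1) hI.func hI.inj
    (fun e => hm (hI.cov e)) (fun x e => (hI.adj e).2.2 rfl) (fun x hx hE => by
      have hE' : Esc (Γ.delete {y}) (Ter N I) x :=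
        hE.to_del (S' := Ter N (insert y I)) (fun v hv => ⟨hm hv.1, hv.2⟩)
          (Set.singleton_subset_iff.2 hyT)
      exact hI.sep x ⟨hx, hE'.not_del⟩ hE') ha.1 haI
  exact ⟨J, M, hJ, fun h => h.not_mem (hT hyT)⟩

/-- If deleting `t ∉ A` leaves the web unhindered, then every wave can be rerouted around `t`
without losing terminal vertices. -/
lemma IsRW.avoid {Γ : Web V} {I : Set V} {N : V → V → Prop} (h : IsRW Γ I N) {t : V}
    (ht : t ∉ Γ.A) (hU : Unh (Γ.delete {t})) :
    ∃ I' N', IsRW (Γ.delete {t}) I' N' ∧ Ter N I ⊆ Ter N' I' := by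
  by_cases hc : t ∈ Cov N I
  swap
  · have out : ∀ v ∈ Cov N I, v ∉ ({t} : Set V) := by
      rintro v hv rfl
      exact hc hv
    exact ⟨I, N, ⟨fun v hv => ⟨h.sub hv, out v (Cov.base hv)⟩,
      fun e => ⟨h.adj e, out _ (h.cov e), out _ (Cov.step (h.cov e) e)⟩, h.func, h.inj, h.cov,
      fun x hx hE => h.sep x hx.1 (hE.of_del fun _ hv _ => hv)⟩, le_rfl⟩
  obtain ⟨a, haI, rt⟩ := hc
  have haA := h.sub haI
  have hat : a ∈ (Γ.delete {t}).A := ⟨haA, fun h' => ht (h' ▸ haA)⟩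
  have htI : t ∉ Cov N (I \ {a}) := by
    rintro ⟨i, hi, r⟩
    exact hi.2 (h.start_unique (h.sub hi.1) haA r rt)
  have ter_cases : ∀ x ∈ Ter N I, x ∈ Cov N (I \ {a}) ∨ ReflTransGen N t x := by
    rintro x ⟨⟨i, hi, r⟩, hx⟩
    by_cases hia : i = a
    · subst hia
      exact .inr (h.ter_unique r rt hx)
    · exact .inl ⟨i, ⟨hi, hia⟩, r⟩
  by_cases hu : ∃ u, N t u
  · obtain ⟨u, hu⟩ := hu
    have hcov := cov_restrict N (insert u (I \ {a}))
    have htu : t ∉ Cov N (insert u (I \ {a})) := by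
      rintro ⟨i, rfl | hi, r⟩
      · exact h.acyclic t (TransGen.head' hu r)
      · exact htI ⟨i, hi, r⟩
    have hTer : Ter N I ⊆ Ter (fun x y => N x y ∧ x ∈ Cov N (insert u (I \ {a})))
        (insert u (I \ {a})) := by
      refine fun x hx => ⟨hcov.ge ?_, fun y e => hx.2 y e.1⟩
      rcases ter_cases x hx with h1 | h1
      · exact Cov.mono (Set.subset_insert _ _) (fun _ _ => id) h1
      · rcases ReflTransGen.cases_head h1 with rfl | ⟨y, e, r⟩
        · exact (hx.2 u hu).elim
        · exact ⟨y, .inl (h.func e hu), r⟩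
    obtain ⟨J, M, hJ, hT⟩ := exchange hU (I₀ := I \ {a})
      (N₀ := fun x y => N x y ∧ x ∈ Cov N (insert u (I \ {a}))) (u₀ := u)
      (fun v hv => ⟨h.sub hv.1, fun h' => ht (h' ▸ h.sub hv.1)⟩)
      (fun h' => Γ.not_into_A _ _ (h.adj hu) h'.1)
      (fun e => ⟨h.adj e.1, fun h' => htu (h' ▸ e.2), fun h' => htu (h' ▸ Cov.step e.2 e.1)⟩)
      (fun e e' => h.func e.1 e'.1) (fun e e' => h.inj e.1 e'.1) (fun e => hcov.ge e.2)
      (fun x e => htu (h.inj e.1 hu ▸ e.2))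
      (fun x hx hE => h.sep x hx.1 (hE.of_del fun _ hv _ => hTer hv)) hat (fun h' => h'.2 rfl)
    exact ⟨J, M, hJ, hTer.trans hT⟩
  · exfalso
    -- A trajectory ending in `t` could simply be dropped, giving a hindrance of `Γ − t`.
    have hcov := cov_restrict N (I \ {a})
    have hTer : ∀ v ∈ Ter N I, v ∉ ({t} : Set V) →
        v ∈ Ter (fun x y => N x y ∧ x ∈ Cov N (I \ {a})) (I \ {a}) := by
      refine fun v hv hvt => ⟨hcov.ge ?_, fun y e => hv.2 y e.1⟩
      rcases ter_cases v hv with h1 | h1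
      · exact h1
      · rcases ReflTransGen.cases_head h1 with rfl | ⟨y, e, -⟩
        exacts [(hvt rfl).elim, (hu ⟨y, e⟩).elim]
    have := hU (I \ {a}) (fun x y => N x y ∧ x ∈ Cov N (I \ {a}))
      ⟨fun v hv => ⟨h.sub hv.1, fun h' => ht (h' ▸ h.sub hv.1)⟩,
      fun e => ⟨h.adj e.1, fun h' => htI (h' ▸ e.2), fun h' => htI (h' ▸ Cov.step e.2 e.1)⟩,
      fun e e' => h.func e.1 e'.1, fun e e' => h.inj e.1 e'.1, fun e => hcov.ge e.2,
      fun x hx hE => h.sep x hx.1 (hE.of_del hTer)⟩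
    exact (this.ge hat).2 rfl

/-! ### The deleted set `T` cannot be closed off from `B` -/

section Main
variable {Γ : Web V} {a : V} {T : Set V}

lemma IsRW.avoid_finite (hTA : ∀ t ∈ T, t ∉ Γ.A)
    (hT : ∀ F ⊆ T, F.Finite → Unh (Γ.delete (insert a F))) {F S : Set V} (hFS : F ⊆ S)
    (hST : S ⊆ T) (hS : S.Finite) {I : Set V} {N : V → V → Prop}
    (h : IsRW (Γ.delete (insert a F)) I N) :
    ∃ I' N', IsRW (Γ.delete (insert a S)) I' N' ∧ Ter N I ⊆ Ter N' I' := by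
  have hF := hS.subset hFS
  have key : ∀ R : Set V, R.Finite → R ⊆ T →
      ∃ I' N', IsRW (Γ.delete (insert a (F ∪ R))) I' N' ∧ Ter N I ⊆ Ter N' I' := by
    intro R hR
    induction R, hR using Set.Finite.induction_on with
    | empty => exact fun _ => ⟨I, N, by simpa using h, le_rfl⟩
    | @insert t R _ hRf ih =>
      intro hRT
      obtain ⟨I', N', h', hsub⟩ := ih fun x hx => hRT (.inr hx)
      have heq : insert a (F ∪ insert t R) = insert a (F ∪ R) ∪ {t} := by
        ext x; simp; tauto
      have hU := hT (F ∪ insert t R) (Set.union_subset (hFS.trans hST) hRT)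
        (hF.union (hRf.insert t))
      rw [heq, ← delete_delete] at hU ⊢
      obtain ⟨J, M, hJ, hsub'⟩ := h'.avoid (fun h1 => hTA t (hRT (.inl rfl)) h1.1) hU
      exact ⟨J, M, hJ, hsub.trans hsub'⟩
  simpa [Set.union_eq_self_of_subset_left hFS] using key S hS hST

lemma Roofed.mono_finite (hTA : ∀ t ∈ T, t ∉ Γ.A)
    (hT : ∀ F ⊆ T, F.Finite → Unh (Γ.delete (insert a F))) {F S : Set V} (hFS : F ⊆ S)
    (hST : S ⊆ T) (hS : S.Finite) {v : V} (h : Roofed (Γ.delete (insert a F)) v) :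
    Roofed (Γ.delete (insert a S)) v := by
  obtain ⟨I, N, hI, hv⟩ := h
  obtain ⟨J, M, hJ, hsub⟩ := hI.avoid_finite hTA hT hFS hST hS
  exact ⟨J, M, hJ, fun hE => hv ((hE.anti hsub).del_mono (Set.insert_subset_insert hFS))⟩

/-- For finite `F ⊆ T`, no vertex of `T` is a terminal vertex of a wave of `Γ − a − F`. -/
lemma IsRW.not_mem_ter (hTA : ∀ t ∈ T, t ∉ Γ.A)
    (hT : ∀ F ⊆ T, F.Finite → Unh (Γ.delete (insert a F))) {F : Set V} (hFT : F ⊆ T)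
    (hF : F.Finite) {I : Set V} {N : V → V → Prop} (h : IsRW (Γ.delete (insert a F)) I N) {v : V}
    (hv : v ∈ T) : v ∉ Ter N I := by
  obtain ⟨J, M, hJ, hsub⟩ := h.avoid_finite hTA hT (Set.subset_insert v F)
    (Set.insert_subset hv hFT) (hF.insert v)
  exact fun hvT => hJ.cov_not_del (hsub hvT).1 (.inr (.inl rfl))

lemma roofed_of_mem {X : Set V} {v : V} (h : v ∈ X) : Roofed (Γ.delete X) v :=
  ⟨_, _, isRW_trivial _, fun hE => hE.not_del h⟩

/-- If `Y ⊆ S` are finite and the vertices of `S \ Y` are roofed in `Γ − a − Y`, then deleting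
only `Y` instead of `S` loses no roofed vertices. -/
lemma Roofed.shrink (hTA : ∀ t ∈ T, t ∉ Γ.A) (hTB : ∀ t ∈ T, t ∉ Γ.B)
    (hT : ∀ F ⊆ T, F.Finite → Unh (Γ.delete (insert a F))) {Y S : Set V} (hYS : Y ⊆ S)
    (hST : S ⊆ T) (hS : S.Finite) (hR : ∀ x ∈ S, x ∉ Y → Roofed (Γ.delete (insert a Y)) x)
    {v : V} (h : Roofed (Γ.delete (insert a S)) v) : Roofed (Γ.delete (insert a Y)) v := by
  obtain ⟨I, N, hI, hmax⟩ := exists_max_wave (Γ.delete (insert a S))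
  obtain ⟨J, M, hJ, hJmax⟩ := exists_max_wave (Γ.delete (insert a Y))
  obtain ⟨J', M', hJ', hsub⟩ := hJ.avoid_finite hTA hT hYS hST hS
  have key : ∀ v, Esc (Γ.delete (insert a Y)) (Ter N I) v →
      Esc (Γ.delete (insert a S)) (Ter N I) v := by
    intro v hv
    induction hv with
    | base hb hs =>
      refine .base ⟨hb.1, ?_⟩ hs
      rintro (h1 | h1)
      exacts [hb.2 (.inl h1), hTB _ (hST h1) hb.1]
    | @step v w e hs _ ih =>
      refine .step ⟨e.1, ?_, ih.not_del⟩ hs ih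
      rintro (h1 | h1)
      · exact e.2.1 (.inl h1)
      have hvR := hJmax v (hR v h1 fun h2 => e.2.1 (.inr h2))
      have hvT := hJ.not_mem_ter hTA hT (hYS.trans hST) (hS.subset hYS) (hST h1)
      refine hvR (.step e hvT ?_)
      have : Esc (Γ.delete (insert a S)) (Ter M' J') w := by
        by_contra hc
        exact hmax w ⟨J', M', hJ', hc⟩ ih
      exact (this.anti hsub).del_mono (Set.insert_subset_insert hYS)
  exact ⟨I, N, hI.down (Set.insert_subset_insert hYS) key, fun hE => hmax v h (key v hE)⟩

/-- Let `E` consist of the vertices of `T` which are never roofed after deletion of a finite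
subset of `T` avoiding them.  Whatever is roofed after deletion of a finite `F ⊆ T` is still
roofed when `E` is deleted instead. -/
lemma Roofed.essential (hTA : ∀ t ∈ T, t ∉ Γ.A) (hTB : ∀ t ∈ T, t ∉ Γ.B)
    (hT : ∀ F ⊆ T, F.Finite → Unh (Γ.delete (insert a F))) {E : Set V}
    (hE : E = {x | x ∈ T ∧ ∀ F ⊆ T, F.Finite → x ∉ F → ¬ Roofed (Γ.delete (insert a F)) x})
    {F₀ : Set V} (hF₀T : F₀ ⊆ T) (hF₀ : F₀.Finite) {v : V}
    (hv : Roofed (Γ.delete (insert a F₀)) v) : Roofed (Γ.delete (insert a E)) v := by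
  have hET : E ⊆ T := by
    rw [hE]; exact fun x hx => hx.1
  have hEne : ∀ x ∈ E, ∀ F ⊆ T, F.Finite → x ∉ F → ¬ Roofed (Γ.delete (insert a F)) x := by
    rw [hE]; exact fun x hx => hx.2
  have hEx : ∀ x, x ∈ T \ E →
      ∃ F ⊆ T, F.Finite ∧ x ∉ F ∧ Roofed (Γ.delete (insert a F)) x := by
    rintro x ⟨hxT, hxE⟩
    by_contra! hc
    exact hxE (hE ▸ ⟨hxT, hc⟩)
  choose! G hGT hGf hxG hGR using hEx
  -- Closing `F₀` under `x ↦ G x`, in countably many finite stages.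
  let S : ℕ → Set V := fun n => Nat.rec F₀ (fun _ s => s ∪ ⋃ x ∈ s \ E, G x) n
  have S_succ : ∀ n, S (n + 1) = S n ∪ ⋃ x ∈ S n \ E, G x := fun _ => rfl
  have ST : ∀ n, S n ⊆ T := by
    intro n
    induction n with
    | zero => exact hF₀T
    | succ n ih =>
      rw [S_succ]
      exact Set.union_subset ih (Set.iUnion₂_subset fun x hx => hGT x ⟨ih hx.1, hx.2⟩)
  have Sf : ∀ n, (S n).Finite := by
    intro n
    induction n with
    | zero => exact hF₀
    | succ n ih =>
      rw [S_succ]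
      exact ih.union ((ih.subset fun _ h => h.1).biUnion fun x hx => hGf x ⟨ST n hx.1, hx.2⟩)
  have Smono : ∀ n, S n ⊆ S (n + 1) := fun n => Set.subset_union_left
  -- The stages of `S`, thinned out to the vertices not yet roofed.
  let Q : ℕ → Set V := fun n =>
    Nat.rec ∅ (fun n q => q ∪ {x | x ∈ S n ∧ ¬ Roofed (Γ.delete (insert a q)) x}) n
  have Q_succ : ∀ n, Q (n + 1) = Q n ∪ {x | x ∈ S n ∧ ¬ Roofed (Γ.delete (insert a (Q n))) x} :=
    fun _ => rfl
  have QS' : ∀ n, Q n ⊆ S n → Q (n + 1) ⊆ S n := fun n h => by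
    rw [Q_succ]; exact Set.union_subset h fun x hx => hx.1
  have QS : ∀ n, Q n ⊆ S n := by
    intro n
    induction n with
    | zero => exact Set.empty_subset _
    | succ n ih => exact (QS' n ih).trans (Smono n)
  have Qmono : Monotone Q := monotone_nat_of_le_succ fun n => by
    rw [Q_succ]; exact Set.subset_union_left
  have QT : ∀ n, Q n ⊆ T := fun n => (QS n).trans (ST n)
  have Qf : ∀ n, (Q n).Finite := fun n => (Sf n).subset (QS n)
  have QR : ∀ {m n}, m ≤ n → ∀ {v}, Roofed (Γ.delete (insert a (Q m))) v →
      Roofed (Γ.delete (insert a (Q n))) v := fun {m n} hmn {v} h =>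
    h.mono_finite hTA hT (Qmono hmn) (QT n) (Qf n)
  have Qnew : ∀ n m, ∀ x ∈ Q m, x ∉ Q n → ¬ Roofed (Γ.delete (insert a (Q n))) x := by
    intro n m
    induction m with
    | zero => exact fun x hx => hx.elim
    | succ m ih =>
      intro x hx hxn hR
      rcases lt_or_ge m n with hmn | hmn
      · exact hxn (Qmono hmn hx)
      · rw [Q_succ] at hx
        rcases hx with hx | hx
        exacts [ih x hx hxn hR, hx.2 (QR hmn hR)]
  let X : Set V := E ∪ ⋃ n, Q n
  have EX : E ⊆ X := Set.subset_union_left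
  have XT : X ⊆ T := Set.union_subset hET (Set.iUnion_subset QT)
  have QX : ∀ n v, Roofed (Γ.delete (insert a (Q n))) v → Roofed (Γ.delete (insert a X)) v := by
    intro n v hv
    obtain ⟨I, N, hI, hmax⟩ := exists_max_wave (Γ.delete (insert a (Q n)))
    have hsub : insert a (Q n) ⊆ insert a X :=
      Set.insert_subset_insert ((Set.subset_iUnion Q n).trans Set.subset_union_right)
    refine ⟨I, N, hI.up hsub ?_, fun h => hmax v hv (h.del_mono hsub)⟩
    intro x hx hxn
    by_contra hc
    have hxR : Roofed (Γ.delete (insert a (Q n))) x := ⟨I, N, hI, hc⟩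
    have hxQ : x ∉ Q n := fun h => hxn (.inr h)
    rcases hx with hx | hx | hx
    · exact hxn (.inl hx)
    · exact hEne x hx (Q n) (QT n) (Qf n) hxQ hxR
    · obtain ⟨m, hm⟩ := Set.mem_iUnion.1 hx
      exact Qnew n m x hm hxQ hxR
  have FX : ∀ n, ∀ F ⊆ S n, ∀ v, Roofed (Γ.delete (insert a F)) v →
      Roofed (Γ.delete (insert a X)) v := by
    intro n F hF v hv
    refine QX (n + 1) v (Roofed.shrink hTA hTB hT (QS' n (QS n)) (ST n) (Sf n) ?_
      (hv.mono_finite hTA hT hF (ST n) (Sf n)))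
    intro x hx hxQ
    by_contra hc
    exact hxQ (.inr ⟨hx, fun h => hc (QR n.le_succ h)⟩)
  obtain ⟨I, N, hI, hmax⟩ := exists_max_wave (Γ.delete (insert a X))
  have key : ∀ v, Esc (Γ.delete (insert a E)) (Ter N I) v →
      Esc (Γ.delete (insert a X)) (Ter N I) v := by
    intro v hv
    induction hv with
    | base hb hs =>
      refine .base ⟨hb.1, ?_⟩ hs
      rintro (h1 | h1)
      exacts [hb.2 (.inl h1), hTB _ (XT h1) hb.1]
    | @step v w e hs _ ih =>
      refine .step ⟨e.1, ?_, ih.not_del⟩ hs ih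
      rintro (h1 | h1 | h1)
      · exact e.2.1 (.inl h1)
      · exact e.2.1 (.inr h1)
      obtain ⟨n, hn⟩ := Set.mem_iUnion.1 h1
      have hvS := QS n hn
      have hvE : v ∉ E := fun h => e.2.1 (.inr h)
      have hvTE : v ∈ T \ E := ⟨ST n hvS, hvE⟩
      have hGS : G v ⊆ S (n + 1) := by
        rw [S_succ]
        exact (Set.subset_biUnion_of_mem (u := G) (show v ∈ S n \ E from ⟨hvS, hvE⟩)).trans
          Set.subset_union_right
      obtain ⟨J, M, hJ, hJmax⟩ := exists_max_wave (Γ.delete (insert a (G v)))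
      have hvJ := hJmax v (hGR v hvTE)
      have hvT := hJ.not_mem_ter hTA hT (hGT v hvTE) (hGf v hvTE) hvTE.1
      refine hmax w (FX (n + 1) _ hGS w ?_) ih
      by_cases hw : w ∈ G v
      · exact roofed_of_mem (.inr hw)
      refine ⟨J, M, hJ, fun hwE => hvJ (.step ⟨e.1, ?_, ?_⟩ hvT hwE)⟩
      · rintro (h2 | h2)
        exacts [e.2.1 (.inl h2), hxG v hvTE h2]
      · rintro (h2 | h2)
        exacts [e.2.2 (.inl h2), hw h2]
  exact ⟨I, N, hI.down (Set.insert_subset_insert EX) key,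
    fun h => hmax v (FX 0 F₀ le_rfl v hv) (key v h)⟩

/-- If `T ∪ {a}` is disjoint from `B` and all finite subsets of `T` can be deleted safely together
with `a`, then `T ∪ {a}` has an out-neighbour outside `T` which is not roofed after deletion of `a`
and any finite subset of `T`. -/
lemma not_closed_off (hU : Unh Γ) (ha : a ∈ Γ.A) (haB : a ∉ Γ.B) (hTA : ∀ t ∈ T, t ∉ Γ.A)
    (hTB : ∀ t ∈ T, t ∉ Γ.B) (hT : ∀ F ⊆ T, F.Finite → Unh (Γ.delete (insert a F)))
    (hout : ∀ v ∈ insert a T, ∀ y, Γ.Adj v y → y ∉ T →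
      ∃ F ⊆ T, F.Finite ∧ Roofed (Γ.delete (insert a F)) y) : False := by
  obtain ⟨E, hE⟩ : ∃ E : Set V, E = {x | x ∈ T ∧ ∀ F ⊆ T, F.Finite → x ∉ F →
    ¬ Roofed (Γ.delete (insert a F)) x} := ⟨_, rfl⟩
  have hET : insert a E ⊆ insert a T := Set.insert_subset_insert (by
    rw [hE]; exact fun x hx => hx.1)
  have hTR : ∀ x ∈ T, Roofed (Γ.delete (insert a E)) x := by
    intro x hx
    by_cases hxE : x ∈ E
    · exact roofed_of_mem (.inr hxE)
    · have : ∃ F ⊆ T, F.Finite ∧ x ∉ F ∧ Roofed (Γ.delete (insert a F)) x := by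
        by_contra! hc
        exact hxE (hE ▸ ⟨hx, hc⟩)
      obtain ⟨F, hF, hFf, -, hR⟩ := this
      exact hR.essential hTA hTB hT hE hF hFf
  obtain ⟨I, N, hI, hmax⟩ := exists_max_wave (Γ.delete (insert a E))
  have key : ∀ v, Esc (Γ.delete ∅) (Ter N I) v → Esc (Γ.delete (insert a E)) (Ter N I) v := by
    intro v hv
    induction hv with
    | base hb hs =>
      refine .base ⟨hb.1, fun h => ?_⟩ hs
      rcases hET h with rfl | h1
      exacts [haB hb.1, hTB _ h1 hb.1]
    | @step v w e hs _ ih =>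
      refine .step ⟨e.1, fun h => ?_, ih.not_del⟩ hs ih
      by_cases hw : w ∈ T
      · exact hmax w (hTR w hw) ih
      · obtain ⟨F, hF, hFf, hR⟩ := hout v (hET h) w e.1 hw
        exact hmax w (hR.essential hTA hTB hT hE hF hFf) ih
  have hW := hI.down (Set.empty_subset _) key
  rw [delete_empty] at hW
  exact (hI.sub ((hU I N hW).ge ha)).2 (.inl rfl)

end Main

/-! ### Waves as sets of paths -/

/-- A walk can be shortened to a path. -/
lemma exists_path {R : V → V → Prop} {Q : V → Prop} {a b : V} (hb : Q b)
    (hR : ∀ x y, R x y → Q x) (h : ReflTransGen R a b) :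
    ∃ p : List V, p ≠ [] ∧ p.Nodup ∧ p.IsChain R ∧ p.head? = some a ∧ p.getLast? = some b ∧
      ∀ x ∈ p, Q x := by
  induction h using ReflTransGen.head_induction_on with
  | refl => exact ⟨[b], by simp, by simp, by simp, by simp, by simp, by simpa using hb⟩
  | @head x y e _ ih =>
    obtain ⟨p, hne, hnd, hch, hhd, hlast, hQ⟩ := ih
    by_cases hx : x ∈ p
    · obtain ⟨l₁, l₂, rfl⟩ := List.append_of_mem hx
      refine ⟨x :: l₂, by simp, (List.nodup_append.1 hnd).2.1, hch.right_of_append, by simp, ?_,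
        fun z hz => hQ z (by simp at hz ⊢; tauto)⟩
      rw [← hlast, List.getLast?_append_of_ne_nil _ (by simp)]
    · refine ⟨x :: p, by simp, List.nodup_cons.2 ⟨hx, hnd⟩, ?_, by simp, ?_, ?_⟩
      · rw [List.isChain_cons]
        refine ⟨fun z hz => ?_, hch⟩
        rw [hhd] at hz
        obtain rfl : y = z := by simpa using hz
        exact e
      · rw [← hlast, List.getLast?_cons_of_ne_nil hne]
      · intro z hz
        rcases List.mem_cons.1 hz with rfl | hz
        exacts [hR _ _ e, hQ z hz]

/-- A vertex that is not roofed starts a path to `B` that avoids `S`. -/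
lemma Esc.exists_path {Γ : Web V} {S : Set V} {v : V} (h : Esc Γ S v) :
    ∃ p : List V, IsFinPath Γ.Adj p ∧ p.head? = some v ∧ (∃ b ∈ Γ.B, p.getLast? = some b) ∧
      ∀ x ∈ p, x ∉ S := by
  have : ∃ b ∈ Γ.B, b ∉ S ∧ ReflTransGen (fun x y => Γ.Adj x y ∧ x ∉ S) v b := by
    induction h with
    | base hb hs => exact ⟨_, hb, hs, .refl⟩
    | step e hs _ ih =>
      obtain ⟨b, hb, hbS, r⟩ := ih
      exact ⟨b, hb, hbS, .head ⟨e, hs⟩ r⟩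
  obtain ⟨b, hb, hbS, r⟩ := this
  obtain ⟨p, h1, h2, h3, h4, h5, h6⟩ :=
    ErdosMenger.exists_path (Q := fun x => x ∉ S) hbS (fun _ _ e => e.2) r
  exact ⟨p, ⟨h1, h2, h3.imp fun _ _ e => e.1⟩, h4, ⟨b, hb, h5⟩, h6⟩

lemma Esc.of_path {Γ : Web V} {S : Set V} {p : List V} {v b : V} (hch : p.IsChain Γ.Adj)
    (hv : p.head? = some v) (hb : b ∈ Γ.B) (hlast : p.getLast? = some b) (hS : ∀ x ∈ p, x ∉ S) :
    Esc Γ S v := by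
  induction p generalizing v with
  | nil => simp at hv
  | cons x p ih =>
    obtain rfl : x = v := by simpa using hv
    cases p with
    | nil =>
      obtain rfl : x = b := by simpa using hlast
      exact .base hb (hS x (by simp))
    | cons y p =>
      rw [List.isChain_cons_cons] at hch
      exact .step hch.1 (hS x (by simp)) (ih hch.2 rfl (by simpa using hlast)
        fun z hz => hS z (List.mem_cons_of_mem _ hz))

/-- A maximal trajectory is determined by its start. -/
lemma chain_unique {N : V → V → Prop} (func : ∀ {x y z}, N x y → N x z → y = z) {l l' : List V}
    (h : l.IsChain N) (h' : l'.IsChain N) (hne : l ≠ []) (hhd : l.head? = l'.head?)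
    (hl : ∀ t, l.getLast? = some t → ∀ x, ¬ N t x)
    (hl' : ∀ t, l'.getLast? = some t → ∀ x, ¬ N t x) : l = l' := by
  induction l generalizing l' with
  | nil => exact (hne rfl).elim
  | cons x l ih =>
    cases l' with
    | nil => simp at hhd
    | cons x' l' =>
      obtain rfl : x = x' := by simpa using hhd
      cases l with
      | nil =>
        cases l' with
        | nil => rfl
        | cons y' l' => exact (hl x rfl y' (List.isChain_cons_cons.1 h').1).elim
      | cons y l =>
        cases l' with
        | nil => exact (hl' x rfl y (List.isChain_cons_cons.1 h).1).elim
        | cons y' l' =>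
          rw [List.isChain_cons_cons] at h h'
          obtain rfl := func h.1 h'.1
          rw [ih h.2 h'.2 (by simp) rfl (fun t ht => hl t (by simpa using ht))
            fun t ht => hl' t (by simpa using ht)]

lemma reach_of_chain {N : V → V → Prop} {l : List V} {i x : V} (h : l.IsChain N)
    (hi : l.head? = some i) (hx : x ∈ l) : ReflTransGen N i x := by
  induction l generalizing i with
  | nil => simp at hx
  | cons y l ih =>
    obtain rfl : y = i := by simpa using hi
    rcases List.mem_cons.1 hx with rfl | hx
    · exact .refl
    · cases l with
      | nil => simp at hx
      | cons z l =>
        rw [List.isChain_cons_cons] at h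
        exact .head h.1 (ih h.2 rfl hx)

/-- The paths of an encoded wave form a wave; infinite trajectories may be dropped, as they have
no terminal vertices. -/
lemma unh_of_not_hindered {Γ : Web V} (h : ¬ Γ.Hindered) : Unh Γ := by
  intro I N hI
  by_contra hne
  let W : Set (GPath V) := {P | ∃ l : List V, P = .fin l ∧ l ≠ [] ∧ l.IsChain N ∧
    (∃ i ∈ I, l.head? = some i) ∧ ∀ t, l.getLast? = some t → ∀ x, ¬ N t x}
  have hin : warpIn W ⊆ I := by
    rintro v ⟨_, ⟨l, rfl, -, -, ⟨i, hi, hhd⟩, -⟩, hv⟩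
    obtain rfl : i = v := by simpa [GPath.initv, hhd] using hv
    exact hi
  have hter : Ter N I ⊆ warpTer W := by
    rintro t ⟨⟨i, hi, r⟩, ht⟩
    obtain ⟨p, h1, -, h3, h4, h5, -⟩ :=
      exists_path (Q := fun _ => True) trivial (fun _ _ _ => trivial) r
    refine ⟨.fin p, ⟨p, rfl, h1, h3, ⟨i, hi, h4⟩, fun t' ht' => ?_⟩, h5⟩
    obtain rfl : t = t' := by simpa [h5] using ht'
    exact ht
  refine h ⟨W, ⟨⟨?_, ?_⟩, hin.trans hI.sub, ?_⟩, fun heq =>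
    hne (le_antisymm hI.sub (heq.ge.trans hin))⟩
  · rintro _ ⟨l, rfl, h1, h2, -, -⟩
    refine ⟨h1, ?_, h2.imp fun _ _ e => hI.adj e⟩
    have hp : l.Pairwise (TransGen N) :=
      List.isChain_iff_pairwise.1 (h2.imp fun _ _ e => TransGen.single e)
    refine hp.imp fun {x y} hxy => ?_
    rintro rfl
    exact hI.acyclic x hxy
  · rintro _ ⟨l, rfl, h1, h2, ⟨i, hi, hhd⟩, hl⟩ _ ⟨l', rfl, -, h2', ⟨i', hi', hhd'⟩, hl'⟩ hPQ v
      hv hv'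
    apply hPQ
    have := hI.start_unique (hI.sub hi) (hI.sub hi') (reach_of_chain h2 hhd hv)
      (reach_of_chain h2' hhd' hv')
    subst this
    rw [chain_unique (N := N) hI.func h2 h2' h1 (hhd.trans hhd'.symm) hl hl']
  · rintro p ⟨⟨_, _, hch⟩, ⟨x, hx, hhd⟩, ⟨b, hb, hlast⟩⟩
    by_contra! hc
    refine hI.sep x hx ((Esc.of_path (S := warpTer W) hch hhd hb hlast ?_).anti hter)
    exact fun z hz hzW => hc z hzW hz

/-- The `n`-th vertex of a path, if there is one. -/
def GPath.nth : GPath V → ℕ → Option V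
  | .fin l, n => l[n]?
  | .inf f, n => some (f n)

namespace GPath
variable {E : V → V → Prop} {P : GPath V}

lemma nth_zero : P.nth 0 = P.initv := by
  cases P with
  | fin l => cases l <;> rfl
  | inf f => rfl

lemma nth_mem {n : ℕ} {x : V} (h : P.nth n = some x) : x ∈ P.verts := by
  cases P with
  | fin l => exact List.mem_of_getElem? h
  | inf f => exact ⟨n, by simpa [nth] using h⟩

lemma nth_inj (hP : P.IsPath E) {n m : ℕ} {x : V} (h : P.nth n = some x)
    (h' : P.nth m = some x) : n = m := by
  cases P with
  | fin l =>
    obtain ⟨hn, h⟩ := List.getElem?_eq_some_iff.1 h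
    obtain ⟨hm, h'⟩ := List.getElem?_eq_some_iff.1 h'
    exact (hP.2.1.getElem_inj_iff (hi := hn) (hj := hm)).1 (h.trans h'.symm)
  | inf f =>
    simp only [nth, Option.some.injEq] at h h'
    exact hP.1 (h.trans h'.symm)

lemma nth_adj (hP : P.IsPath E) {n : ℕ} {x y : V} (h : P.nth n = some x)
    (h' : P.nth (n + 1) = some y) : E x y := by
  cases P with
  | fin l =>
    obtain ⟨hn, rfl⟩ := List.getElem?_eq_some_iff.1 h
    obtain ⟨hm, rfl⟩ := List.getElem?_eq_some_iff.1 h'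
    exact List.isChain_iff_getElem.1 hP.2.2 n hm
  | inf f =>
    simp only [nth, Option.some.injEq] at h h'
    subst h h'
    exact hP.2 n

lemma nth_pred {n : ℕ} {y : V} (h : P.nth (n + 1) = some y) : ∃ x, P.nth n = some x := by
  cases P with
  | fin l =>
    obtain ⟨hn, -⟩ := List.getElem?_eq_some_iff.1 h
    exact ⟨l[n], List.getElem?_eq_getElem (by omega)⟩
  | inf f => exact ⟨f n, rfl⟩

lemma terv_nth {t : V} (h : P.terv = some t) : ∃ n, P.nth n = some t ∧ P.nth (n + 1) = none := by
  cases P with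
  | fin l =>
    refine ⟨l.length - 1, ?_, ?_⟩
    · rw [← h]
      exact List.getLast?_eq_getElem?.symm
    · exact List.getElem?_eq_none (by omega)
  | inf f => simp [terv] at h

end GPath

lemma not_hindered_of_unh {Γ : Web V} (h : Unh Γ) : ¬ Γ.Hindered := by
  rintro ⟨W, ⟨⟨hpath, hdisj⟩, hin, hsep⟩, hne⟩
  have same : ∀ {P Q}, P ∈ W → Q ∈ W → ∀ {n m x}, P.nth n = some x → Q.nth m = some x →
      P = Q ∧ n = m := by
    intro P Q hP hQ n m x hx hx'
    have : P = Q := by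
      by_contra hPQ
      exact hdisj P hP Q hQ hPQ x (GPath.nth_mem hx) (GPath.nth_mem hx')
    subst this
    exact ⟨rfl, GPath.nth_inj (hpath P hP) hx hx'⟩
  let N : V → V → Prop := fun x y => ∃ P ∈ W, ∃ n, P.nth n = some x ∧ P.nth (n + 1) = some y
  have hcov : ∀ P ∈ W, ∀ n x, P.nth n = some x → x ∈ Cov N (warpIn W) := by
    intro P hP n
    induction n with
    | zero => exact fun x hx => Cov.base ⟨P, hP, GPath.nth_zero ▸ hx⟩
    | succ n ih =>
      intro y hy
      obtain ⟨x, hx⟩ := GPath.nth_pred hy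
      exact Cov.step (ih x hx) ⟨P, hP, n, hx, hy⟩
  have hter : warpTer W ⊆ Ter N (warpIn W) := by
    rintro t ⟨P, hP, ht⟩
    obtain ⟨n, hn, hn'⟩ := GPath.terv_nth ht
    refine ⟨hcov P hP n t hn, ?_⟩
    rintro x ⟨Q, hQ, m, hm, hm'⟩
    obtain ⟨rfl, rfl⟩ := same hP hQ hn hm
    simp [hn'] at hm'
  refine hne (h (warpIn W) N ⟨hin, ?_, ?_, ?_, ?_, ?_⟩)
  · rintro x y ⟨P, hP, n, hx, hy⟩
    exact GPath.nth_adj (hpath P hP) hx hy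
  · rintro x y z ⟨P, hP, n, hx, hy⟩ ⟨Q, hQ, m, hx', hz⟩
    obtain ⟨rfl, rfl⟩ := same hP hQ hx hx'
    exact Option.some_injective _ (hy.symm.trans hz)
  · rintro x y z ⟨P, hP, n, hx, hz⟩ ⟨Q, hQ, m, hy, hz'⟩
    obtain ⟨rfl, hnm⟩ := same hP hQ hz hz'
    obtain rfl : n = m := by omega
    exact Option.some_injective _ (hx.symm.trans hy)
  · rintro x y ⟨P, hP, n, hx, -⟩
    exact hcov P hP n x hx
  · intro x hx hE
    obtain ⟨p, hp, hhd, hlast, hav⟩ := (hE.anti hter).exists_path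
    obtain ⟨s, hs, hsp⟩ := hsep p ⟨hp, ⟨x, hx, hhd⟩, hlast⟩
    exact hav s hsp hs

/-! ### The safe path -/

/-- Safely linking one point: if `Γ` is unhindered, then every `a ∈ A` can be
linked to `B` by a finite path `P` such that `Γ − V(P)` is unhindered. -/
theorem safe_linking (V : Type*) (Γ : Web V) (h : ¬ Γ.Hindered)
    (a : V) (ha : a ∈ Γ.A) :
    ∃ p : List V, IsFinPath Γ.Adj p ∧ p.head? = some a ∧
      (∃ b ∈ Γ.B, p.getLast? = some b) ∧
      ¬ (Γ.delete {v | v ∈ p}).Hindered := by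
  have hU := unh_of_not_hindered h
  -- The edges along which `T` is to be reachable from `a`.
  let R : Set V → V → V → Prop := fun T x y => Γ.Adj x y ∧ x ∈ insert a T ∧ y ∈ T
  have Rmono : ∀ {T T' : Set V}, T ⊆ T' → ∀ {x}, TransGen (R T) a x → TransGen (R T') a x :=
    fun {T T'} hs _ hx => TransGen.mono (p := R T') (fun _ _ e =>
      ⟨e.1, Set.insert_subset_insert hs e.2.1, hs e.2.2⟩) _ _ hx
  let 𝒯 : Set (Set V) := {T | (∀ x ∈ T, TransGen (R T) a x) ∧
    ∀ F ⊆ T, F.Finite → Unh (Γ.delete (insert a F))}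
  obtain ⟨T, -, hmax⟩ := zorn_subset_nonempty 𝒯 (fun c hc hchain hne => ⟨⋃₀ c, ⟨by
      rintro x ⟨T, hT, hx⟩
      exact Rmono (Set.subset_sUnion_of_mem hT) ((hc hT).1 x hx), by
      intro F hF hFf
      obtain ⟨T, hT, hFT⟩ := hchain.directedOn.exists_mem_subset_of_finite_of_subset_sUnion
        hne hFf hF
      exact (hc hT).2 F hFT hFf⟩, fun s hs => Set.subset_sUnion_of_mem hs⟩) ∅
    ⟨fun x hx => hx.elim, fun F hF _ => by
      rw [Set.subset_empty_iff.1 hF]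
      simpa using hU.delete_mem ha⟩
  obtain ⟨hreach, hT⟩ := hmax.1
  have hTA : ∀ t ∈ T, t ∉ Γ.A := by
    intro t ht
    obtain ⟨x, -, e⟩ := TransGen.tail'_iff.1 (hreach t ht)
    exact Γ.not_into_A _ _ e.1
  by_cases hB : ∃ b ∈ insert a T, b ∈ Γ.B
  · obtain ⟨b, hbT, hb⟩ := hB
    have r : ReflTransGen (R T) a b := by
      rcases hbT with rfl | hbT
      exacts [.refl, (hreach b hbT).to_reflTransGen]
    obtain ⟨p, h1, h2, h3, h4, h5, h6⟩ :=
      exists_path (Q := fun x => x ∈ insert a T) hbT (fun _ _ e => e.2.1) r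
    refine ⟨p, ⟨h1, h2, h3.imp fun _ _ e => e.1⟩, h4, ⟨b, hb, h5⟩, not_hindered_of_unh ?_⟩
    have hap : a ∈ p := List.mem_of_head? h4
    have heq : {v | v ∈ p} = insert a {v | v ∈ p ∧ v ≠ a} := by
      ext v
      by_cases hva : v = a <;> simp [hva, hap]
    rw [heq]
    exact hT _ (fun v hv => (h6 v hv.1).resolve_left hv.2)
      ((List.finite_toSet p).subset fun v hv => hv.1)
  · exfalso
    push Not at hB
    refine not_closed_off hU ha (hB a (.inl rfl)) hTA (fun t ht => hB t (.inr ht)) hT ?_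
    intro v hv y e hy
    have hyA := Γ.not_into_A _ _ e
    have hins : insert y T ∉ 𝒯 := fun hmem =>
      hy (hmax.2 hmem (Set.subset_insert y T) (.inl rfl))
    have hlast : R (insert y T) v y :=
      ⟨e, Set.insert_subset_insert (Set.subset_insert y T) hv, .inl rfl⟩
    have hreach' : ∀ x ∈ insert y T, TransGen (R (insert y T)) a x := by
      rintro x (rfl | hx)
      · rcases hv with rfl | hv
        · exact .single hlast
        · exact (Rmono (Set.subset_insert _ T) (hreach v hv)).tail hlast
      · exact Rmono (Set.subset_insert y T) (hreach x hx)
    have : ∃ F ⊆ insert y T, F.Finite ∧ ¬ Unh (Γ.delete (insert a F)) := by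
      by_contra! hc
      exact hins ⟨hreach', hc⟩
    obtain ⟨F, hF, hFf, hFU⟩ := this
    have hFT : F \ {y} ⊆ T := fun x hx => (hF hx.1).resolve_left hx.2
    have hyF : y ∈ F := by
      by_contra hyF
      exact hFU (hT F (fun x hx => (hF hx).resolve_left fun hxy => hyF (hxy ▸ hx)) hFf)
    have hFf' := hFf.subset (Set.sdiff_subset (s := F) (t := {y}))
    refine ⟨F \ {y}, hFT, hFf', roofed_of_hindered (hT _ hFT hFf') (fun h' => hyA h'.1) ?_⟩
    rw [delete_delete]
    convert hFU using 3
    ext x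
    by_cases hxy : x = y <;> simp [hxy, hyF]

end ErdosMenger
end

section
/- If W is a wave in a web Γ = (D, A, B), then the warp E(W) of essential paths of W is also a wave, where a path P ∈ W is essential if P is finite and ter(P) is essential in ter[W]. -/
/-!
Only the separation property of `E(W)` needs an argument. Given an `A`–`B` path `p`, the wave
property gives a vertex of `p` in `ter[W]`; let `x` be the last such vertex along `p`
(`exists_last_mem`). The final segment of `p` starting at `x` is a path to `B` that meets
`ter[W]` only in `x`, so `x` is essential, and the path of `W` ending in `x` belongs to `E(W)`.
-/

namespace ErdosMenger

variable {V : Type*}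

variable {V : Type*}

/-- The set of essential vertices of `S`: those `s ∈ S` from which there is a
finite path to `B` meeting `S` only at `s`. -/
def essentialIn (Γ : Web V) (S : Set V) : Set V :=
  {s | s ∈ S ∧ ∃ p : List V, IsFinPath Γ.Adj p ∧ p.head? = some s ∧
    (∃ b ∈ Γ.B, p.getLast? = some b) ∧ ∀ v ∈ p, v ∈ S → v = s}

theorem exists_last_mem {V : Type*} (S : Set V) (p : List V) (h : ∃ s ∈ S, s ∈ p) :
    ∃ (l₁ : List V) (x : V) (l₂ : List V), p = l₁ ++ x :: l₂ ∧ x ∈ S ∧ ∀ v ∈ l₂, v ∉ S := by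
  induction p with
  | nil => simp at h
  | cons a p ih =>
    by_cases hp : ∃ s ∈ S, s ∈ p
    · obtain ⟨l₁, x, l₂, rfl, hx, hl⟩ := ih hp
      exact ⟨a :: l₁, x, l₂, rfl, hx, hl⟩
    · obtain ⟨s, hs, hsp⟩ := h
      rcases List.mem_cons.1 hsp with rfl | hsp
      · exact ⟨[], s, p, rfl, hs, fun v hv hvS => hp ⟨v, hvS, hv⟩⟩
      · exact absurd ⟨s, hs, hsp⟩ hp

/-- If `W` is a wave, then the warp `E(W)` of essential paths of `W` (the
finite paths of `W` whose terminal vertex is essential in `ter[W]`) is also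
a wave. -/
theorem essential_paths_wave (V : Type*) (Γ : Web V) (W : Set (GPath V))
    (hW : Γ.IsWave W) :
    Γ.IsWave {P | P ∈ W ∧ ∃ t : V, P.terv = some t ∧ t ∈ essentialIn Γ (warpTer W)} := by
  obtain ⟨⟨hpath, hdisj⟩, hin, hsep⟩ := hW
  refine ⟨⟨fun P hP => hpath P hP.1, fun P hP Q hQ => hdisj P hP.1 Q hQ.1⟩, ?_, ?_⟩
  · rintro v ⟨P, hP, hv⟩
    exact hin ⟨P, hP.1, hv⟩
  · intro p hp
    obtain ⟨l₁, x, l₂, rfl, hx, hl⟩ := exists_last_mem _ p (hsep p hp)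
    obtain ⟨⟨-, hnd, hch⟩, -, b, hb, hlast⟩ := hp
    have hess : x ∈ essentialIn Γ (warpTer W) := by
      refine ⟨hx, x :: l₂, ⟨by simp, (List.nodup_append.1 hnd).2.1, ?_⟩, rfl, ⟨b, hb, ?_⟩, ?_⟩
      · exact List.IsChain.right_of_append hch
      · simpa using hlast
      · intro v hv hvS
        rcases List.mem_cons.1 hv with rfl | hv
        · rfl
        · exact absurd hvS (hl v hv)
    obtain ⟨P, hP, ht⟩ := hx
    exact ⟨x, ⟨P, ⟨hP, x, ht, hess⟩, ht⟩, by simp⟩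

end ErdosMenger
end

section
/- Self-roofing lemma: if W is a wave in a web Γ = (D, A, B), then every vertex v lying on some path of W is separated from B by ter[W], i.e., every finite path from v to B contains a vertex of ter[W]. -/
/-!
Let `v` lie on a path `P` of the wave `W`, and let `p` be a path from `v` to `B`. Follow `P` from
its initial vertex in `A` up to `v` and then continue along `p`. This `A`–`B` walk contains an
`A`–`B` path (`exists_path_of_chain`), which meets `ter[W]` in some vertex `t`. If `t` lies
on the initial segment of `P`, then disjointness of the paths of `W` forces `t` to be the terminal
vertex of `P` itself, so the segment is all of `P` and `t = v` (`exists_initial_segment`).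
Hence `t` lies on `p` in either case.
-/


namespace ErdosMenger

variable {V : Type*}

variable {V : Type*}

/-- Every finite walk contains a path with the same end vertices. -/
theorem exists_path_of_chain {V : Type*} {E : V → V → Prop} (l : List V) (hl : l ≠ [])
    (hc : l.IsChain E) :
    ∃ r : List V, IsFinPath E r ∧ r.head? = l.head? ∧ r.getLast? = l.getLast? ∧ r ⊆ l := by
  induction l with
  | nil => exact absurd rfl hl
  | cons a l ih =>
    rcases l with _ | ⟨b, l⟩
    · exact ⟨[a], ⟨by simp, by simp, List.isChain_singleton a⟩, rfl, rfl, by simp⟩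
    · obtain ⟨hab, hc'⟩ := List.isChain_cons_cons.1 hc
      obtain ⟨r, ⟨hr, hnd, hrc⟩, hh, hlast, hsub⟩ := ih (by simp) hc'
      by_cases har : a ∈ r
      · -- the path revisits `a`: cut off the closed walk before this visit
        obtain ⟨s, t, rfl⟩ := List.append_of_mem har
        refine ⟨a :: t, ⟨by simp, (List.nodup_append.1 hnd).2.1,
          List.IsChain.right_of_append hrc⟩, rfl, ?_, ?_⟩
        · rw [List.getLast?_cons_cons, ← hlast, List.getLast?_append_cons]
        · intro x hx
          exact List.mem_cons_of_mem _ (hsub (List.mem_append_right s hx))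
      · obtain ⟨c, r, rfl⟩ := List.exists_cons_of_ne_nil hr
        have hcb : c = b := by simpa using hh
        subst hcb
        refine ⟨a :: c :: r, ⟨by simp, List.nodup_cons.2 ⟨har, hnd⟩,
          List.isChain_cons_cons.2 ⟨hab, hrc⟩⟩, rfl, ?_, ?_⟩
        · rw [List.getLast?_cons_cons, List.getLast?_cons_cons, hlast]
        · exact List.cons_subset_cons a hsub

/-- The initial segment `s ++ [v]` of a path `P` up to a vertex `v`; the terminal vertex of `P`
lies on it only if it is `v`. -/
theorem exists_initial_segment {V : Type*} {E : V → V → Prop} (P : GPath V) (hP : P.IsPath E)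
    (v : V) (hv : v ∈ P.verts) :
    ∃ s : List V, (s ++ [v]).IsChain E ∧ (s ++ [v]).head? = P.initv ∧
      (∀ x ∈ s ++ [v], x ∈ P.verts) ∧ ∀ t ∈ s ++ [v], P.terv = some t → t = v := by
  rcases P with l | f
  · obtain ⟨-, hnd, hc⟩ := hP
    obtain ⟨s, t, rfl⟩ := List.append_of_mem (show v ∈ l from hv)
    rw [List.append_cons] at hnd hc
    refine ⟨s, List.IsChain.left_of_append hc, ?_, ?_, ?_⟩
    · cases s <;> rfl
    · intro x hx
      change x ∈ s ++ v :: t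
      rw [List.append_cons]
      exact List.mem_append_left t hx
    · intro x hx hter
      change (s ++ v :: t).getLast? = some x at hter
      rw [List.getLast?_append_cons] at hter
      rcases t with _ | ⟨w, t⟩
      · simpa using hter.symm
      · rw [List.getLast?_cons_cons] at hter
        exact absurd rfl ((List.nodup_append.1 hnd).2.2 x hx x (List.mem_of_getLast? hter))
  · obtain ⟨-, hE⟩ := hP
    obtain ⟨n, rfl⟩ := hv
    have hs : (List.range n).map f ++ [f n] = (List.range (n + 1)).map f := by
      simp [List.range_succ]
    refine ⟨(List.range n).map f, ?_, ?_, ?_, ?_⟩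
    · rw [hs, List.isChain_iff_getElem]
      intro i hi
      simpa using hE i
    · rw [hs, List.range_succ_eq_map]
      rfl
    · intro x hx
      rw [hs] at hx
      obtain ⟨i, -, rfl⟩ := List.mem_map.1 hx
      exact ⟨i, rfl⟩
    · intro t _ hter
      cases hter

/-- The self-roofing lemma: if `W` is a wave, then every vertex `v` lying on
some path of `W` is separated from `B` by `ter[W]`: every finite path from
`v` to `B` contains a vertex of `ter[W]`. -/
theorem self_roofing (V : Type*) (Γ : Web V) (W : Set (GPath V))
    (hW : Γ.IsWave W) (v : V) (hv : ∃ P ∈ W, v ∈ P.verts)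
    (p : List V) (hp : IsFinPath Γ.Adj p) (hph : p.head? = some v)
    (hpl : ∃ b ∈ Γ.B, p.getLast? = some b) :
    ∃ t ∈ warpTer W, t ∈ p := by
  obtain ⟨⟨hpath, hdisj⟩, hin, hsep⟩ := hW
  obtain ⟨P, hPW, hvP⟩ := hv
  obtain ⟨s, hsc, hsh, hsv, hst⟩ := exists_initial_segment P (hpath P hPW) v hvP
  obtain ⟨b, hb, hpl⟩ := hpl
  obtain ⟨p, rfl⟩ : ∃ p', p = v :: p' := by
    rcases p with _ | ⟨w, p⟩
    · simp at hph
    · exact ⟨p, by simpa using hph⟩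
  have hchain : (s ++ v :: p).IsChain Γ.Adj := List.isChain_split.2 ⟨hsc, hp.2.2⟩
  obtain ⟨r, hr, hrh, hrl, hrs⟩ := exists_path_of_chain _ (by simp) hchain
  have hhead : (s ++ v :: p).head? = P.initv := by
    rw [← hsh]
    cases s <;> rfl
  obtain ⟨a, ha⟩ : ∃ a, P.initv = some a := by
    rw [← hsh]
    cases s <;> simp
  obtain ⟨t, ⟨Q, hQW, hQt⟩, htr⟩ := hsep r
    ⟨hr, ⟨a, hin ⟨P, hPW, ha⟩, by rw [hrh, hhead, ha]⟩,
      ⟨b, hb, by rw [hrl, List.getLast?_append_cons, hpl]⟩⟩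
  refine ⟨t, ⟨Q, hQW, hQt⟩, ?_⟩
  rcases List.mem_append.1 (hrs htr) with hts | htp
  · have hts' : t ∈ s ++ [v] := List.mem_append_left _ hts
    have htQ : t ∈ Q.verts := by
      rcases Q with l | f
      · exact List.mem_of_getLast? hQt
      · cases hQt
    have hPQ : P = Q := by
      by_contra hne
      exact hdisj P hPW Q hQW hne t (hsv t hts') htQ
    subst hPQ
    rw [hst t hts' hQt]
    exact List.mem_cons_self
  · exact htp

end ErdosMenger
end

section
/- Let Γ = (D, A, B) be a web, let Q ⊆ V \ (A ∪ B), and let U be a wave in the web Γ − Q. Suppose that for every vertex y ∉ Q that receives a directed edge from some vertex of Q, every finite path in Γ − Q from y to B meets ter[U]. Then U is a wave in Γ. -/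
/-!
Paths of `Γ − Q` are paths of `Γ`, so only the separation property of `ter[U]` needs an
argument. Take an `A`–`B` path of `Γ`. If it avoids `Q`, it is a path of `Γ − Q` and meets
`ter[U]` because `U` is a wave there. Otherwise the part after its last vertex in `Q` is
nonempty, as `Q` is disjoint from `B`; it is a path of `Γ − Q` from an out-neighbour of `Q`
to `B`, hence meets `ter[U]` by hypothesis (`meets_or_avoids`).
-/

namespace ErdosMenger

variable {V : Type*}

variable {V : Type*}

/-- A path of `Γ` that avoids `Q` is a path of `Γ − Q`. -/
lemma chain_delete (Γ : Web V) (Q : Set V) (p : List V) (hp : p.IsChain Γ.Adj)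
    (hpQ : ∀ v ∈ p, v ∉ Q) : p.IsChain (Γ.delete Q).Adj := by
  induction p with
  | nil => exact .nil
  | cons v l ih =>
    cases l with
    | nil => exact .singleton v
    | cons w l =>
      rw [List.isChain_cons_cons] at hp ⊢
      exact ⟨⟨hp.1, hpQ v (by simp), hpQ w (by simp)⟩,
        ih hp.2 fun u hu => hpQ u (List.mem_cons_of_mem v hu)⟩

/-- A path of `Γ` ending in `B` meets `T` or avoids `Q`, provided that `T` separates the
out-neighbours of `Q` from `B` in `Γ − Q`. The induction on the path cuts it, in effect,
right after its last vertex in `Q`. -/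
lemma meets_or_avoids (Γ : Web V) (Q T : Set V) (hQ : ∀ v ∈ Q, v ∉ Γ.B)
    (hsep : ∀ y : V, y ∉ Q → (∃ q ∈ Q, Γ.Adj q y) →
      ∀ p : List V, IsFinPath (Γ.delete Q).Adj p → p.head? = some y →
        (∃ b ∈ (Γ.delete Q).B, p.getLast? = some b) → ∃ t ∈ T, t ∈ p)
    (b : V) (hb : b ∈ Γ.B) (p : List V) (hnd : p.Nodup) (hp : p.IsChain Γ.Adj)
    (hlast : p.getLast? = some b) :
    (∃ t ∈ T, t ∈ p) ∨ ∀ v ∈ p, v ∉ Q := by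
  have hbQ : b ∉ Q := fun h => hQ b h hb
  induction p with
  | nil => simp at hlast
  | cons v l ih =>
    cases l with
    | nil =>
      obtain rfl : v = b := by simpa using hlast
      right
      simpa using hbQ
    | cons w l =>
      rw [List.isChain_cons_cons] at hp
      rw [List.getLast?_cons_cons] at hlast
      have hnd' := (List.nodup_cons.1 hnd).2
      rcases ih hnd' hp.2 hlast with ⟨t, ht, htl⟩ | hav
      · exact .inl ⟨t, ht, List.mem_cons_of_mem v htl⟩
      · by_cases hv : v ∈ Q
        · obtain ⟨t, ht, htl⟩ := hsep w (hav w (by simp)) ⟨v, hv, hp.1⟩ (w :: l)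
            ⟨by simp, hnd', chain_delete Γ Q _ hp.2 hav⟩ rfl ⟨b, ⟨hb, hbQ⟩, hlast⟩
          exact .inl ⟨t, ht, List.mem_cons_of_mem v htl⟩
        · exact .inr (List.forall_mem_cons.2 ⟨hv, hav⟩)

/-- Lemma `separatingoutneighbors`: let `Q ⊆ V \ (A ∪ B)` and let `U` be a
wave in `Γ − Q` such that every out-neighbour `y ∉ Q` of `Q` is separated
from `B` by `ter[U]` in `Γ − Q`. Then `U` is a wave in `Γ`. -/
theorem wave_of_deleted (V : Type*) (Γ : Web V) (Q : Set V)
    (hQ : ∀ v ∈ Q, v ∉ Γ.A ∪ Γ.B)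
    (U : Set (GPath V)) (hU : (Γ.delete Q).IsWave U)
    (hsep : ∀ y : V, y ∉ Q → (∃ q ∈ Q, Γ.Adj q y) →
      ∀ p : List V, IsFinPath (Γ.delete Q).Adj p → p.head? = some y →
        (∃ b ∈ (Γ.delete Q).B, p.getLast? = some b) →
        ∃ t ∈ warpTer U, t ∈ p) :
    Γ.IsWave U := by
  obtain ⟨⟨hpath, hdisj⟩, hin, hS⟩ := hU
  refine ⟨⟨fun P hP => ?_, hdisj⟩, fun v hv => (hin hv).1, ?_⟩
  · have h := hpath P hP
    cases P with
    | fin l => exact ⟨h.1, h.2.1, List.IsChain.imp (fun _ _ e => e.1) h.2.2⟩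
    | inf f => exact ⟨h.1, fun n => (h.2 n).1⟩
  · rintro p ⟨⟨hne, hnd, hch⟩, ⟨a, ha, hhead⟩, b, hb, hlast⟩
    rcases meets_or_avoids Γ Q (warpTer U) (fun v hv h => hQ v hv (.inr h)) hsep b hb p hnd hch
      hlast with h | hav
    · exact h
    · exact hS p ⟨⟨hne, hnd, chain_delete Γ Q p hch hav⟩,
        ⟨a, ⟨ha, fun h => hQ a h (.inl ha)⟩, hhead⟩, b, ⟨hb, fun h => hQ b h (.inr hb)⟩, hlast⟩

end ErdosMenger
end

section
/- If a web Γ = (D, A, B) is hindered and X is a finite subset of V \ A, then the web Γ − X is hindered. -/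
/-!
By induction it suffices to delete one vertex `x ∉ A`. Let `W` be a hindrance and let `W'` consist
of the paths of `W` that avoid `x`. Unless `W'` is already a hindrance of `Γ - x`, the path `P` of
`W` through `x` is finite and ends in some `t ≠ x`. Now `T = ter[W'] ∪ {t}` separates `A` from `B`,
and `W'` misses at least two vertices of `A`: one missed by `W`, and the initial vertex of `P`.

An augmenting-path argument finishes the proof. The warp `W'` is encoded as a map `f₀` sending a
vertex to its successor on `W'`, and fixing every vertex off `W'`. This is a matching between
copies of `V \ T` and `V \ A`: it leaves exactly the set `U = A \ in[W']` unmatched on the left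
and exactly `t` unmatched on the right. Let `R` be the set of left vertices reached from `U` by
alternating paths (the union of the sets `layer`).

* If some `u ∈ R` sends an edge to `t`, then switching along an alternating path of minimal length
  (`exists_exchange`) gives a matching that covers `t` and one more vertex `c ∈ U`. It differs from
  `f₀` in finitely many places, so it contains no backward rays, because `f₀` contains none.
  Following it from `A \ (U \ {c})` until `T` is met therefore gives a wave with terminal set
  containing `T`, and it misses a vertex of `U`.
* Otherwise, follow `f₀` from `A \ U` until `R` is left. The terminal vertices separate `A` from
  `B`: a path from `A` to `B` either starts outside `R`, or has an edge from `R` to its complement,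
  and the end of that edge is the first vertex outside `R` on its path of `W'`.

In both cases the orbits are turned into a warp by `exists_warp`.
-/


namespace ErdosMenger

variable {V : Type*}

variable {V : Type*}

/-! ### Paths as partial sequences -/

namespace GPath

/-- The `n`-th vertex of a path, or `none` if a finite path has no such vertex. -/
def get : GPath V → ℕ → Option V
  | .fin l, n => l[n]?
  | .inf f, n => some (f n)

lemma mem_verts_iff (P : GPath V) (v : V) : v ∈ P.verts ↔ ∃ n, P.get n = some v := by
  cases P with
  | fin l => simp [verts, get, List.mem_iff_getElem?]
  | inf f => simp [verts, get]

lemma initv_eq (P : GPath V) : P.initv = P.get 0 := by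
  cases P with
  | fin l => simp [initv, get, List.head?_eq_getElem?]
  | inf f => simp [initv, get]

lemma get_pred {P : GPath V} {n : ℕ} {v : V} (h : P.get (n + 1) = some v) :
    ∃ u, P.get n = some u := by
  cases P with
  | fin l =>
    simp only [get] at h ⊢
    obtain ⟨h', -⟩ := List.getElem?_eq_some_iff.1 h
    exact ⟨l[n], List.getElem?_eq_getElem (by omega)⟩
  | inf f => exact ⟨_, rfl⟩

lemma terv_iff (P : GPath V) (v : V) :
    P.terv = some v ↔ ∃ n, P.get n = some v ∧ P.get (n + 1) = none := by
  cases P with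
  | fin l =>
    simp only [terv, get, List.getLast?_eq_getElem?]
    constructor
    · intro h
      obtain ⟨h', -⟩ := List.getElem?_eq_some_iff.1 h
      exact ⟨_, h, List.getElem?_eq_none (by omega)⟩
    · rintro ⟨n, h1, h2⟩
      obtain ⟨h', -⟩ := List.getElem?_eq_some_iff.1 h1
      have h3 := List.getElem?_eq_none_iff.1 h2
      have : l.length - 1 = n := by omega
      rw [this, h1]
  | inf f => simp [terv, get]

lemma IsPath.get_inj {E : V → V → Prop} {P : GPath V} (hP : P.IsPath E) {m n : ℕ} {v : V}
    (hm : P.get m = some v) (hn : P.get n = some v) : m = n := by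
  cases P with
  | fin l =>
    simp only [get] at hm hn
    obtain ⟨h1, e1⟩ := List.getElem?_eq_some_iff.1 hm
    obtain ⟨h2, e2⟩ := List.getElem?_eq_some_iff.1 hn
    exact (List.Nodup.getElem_inj_iff hP.2.1).1 (e1.trans e2.symm)
  | inf f =>
    simp only [get, Option.some.injEq] at hm hn
    exact hP.1 (hm.trans hn.symm)

lemma IsPath.get_adj {E : V → V → Prop} {P : GPath V} (hP : P.IsPath E) {n : ℕ} {u v : V}
    (hm : P.get n = some u) (hn : P.get (n + 1) = some v) : E u v := by
  cases P with
  | fin l =>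
    simp only [get] at hm hn
    obtain ⟨h1, rfl⟩ := List.getElem?_eq_some_iff.1 hm
    obtain ⟨h2, rfl⟩ := List.getElem?_eq_some_iff.1 hn
    exact List.isChain_iff_getElem.1 hP.2.2 n h2
  | inf f =>
    simp only [get, Option.some.injEq] at hm hn
    subst hm hn
    exact hP.2 n

lemma IsPath.exists_initv {E : V → V → Prop} {P : GPath V} (hP : P.IsPath E) :
    ∃ v, P.get 0 = some v := by
  cases P with
  | fin l =>
    obtain ⟨h, -⟩ := hP
    cases l with
    | nil => exact absurd rfl h
    | cons a l => exact ⟨a, rfl⟩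
  | inf f => exact ⟨_, rfl⟩

end GPath

/-- No edge enters `A`, so a path of a web meets `A` at most in its initial vertex. -/
lemma pos_eq_zero_of_mem_A (Γ : Web V) {P : GPath V} (hP : P.IsPath Γ.Adj) {n : ℕ} {v : V}
    (h : P.get n = some v) (hv : v ∈ Γ.A) : n = 0 := by
  cases n with
  | zero => rfl
  | succ n =>
    obtain ⟨u, hu⟩ := GPath.get_pred h
    exact absurd hv (Γ.not_into_A _ _ (hP.get_adj hu h))

/-! ### Warps from orbits of a map -/

/-- `v` lies on the orbit under `f` of some vertex of `I`, and the orbit does not meet `Z`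
before `v`. -/
def Reach_s16 (f : V → V) (I Z : Set V) (v : V) : Prop :=
  ∃ s ∈ I, ∃ n, (∀ i < n, f^[i] s ∉ Z) ∧ f^[n] s = v

lemma Reach_s16.step {f : V → V} {I Z : Set V} {v : V} (h : Reach_s16 f I Z v) (hv : v ∉ Z) :
    Reach_s16 f I Z (f v) := by
  obtain ⟨s, hs, n, hn, rfl⟩ := h
  refine ⟨s, hs, n + 1, fun i hi => ?_, Function.iterate_succ_apply' _ _ _⟩
  rcases Nat.lt_succ_iff_lt_or_eq.1 hi with h | rfl
  · exact hn i h
  · exact hv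

open Classical in
/-- The orbit of `s` under `f`, stopped at the first vertex in `Z` (infinite if there is none). -/
noncomputable def orbitPath (f : V → V) (Z : Set V) (s : V) : GPath V :=
  if h : ∃ n, f^[n] s ∈ Z then
    .fin ((List.range (Nat.find h + 1)).map fun i => f^[i] s)
  else .inf fun i => f^[i] s

lemma orbitPath_initv (f : V → V) (Z : Set V) (s : V) : (orbitPath f Z s).initv = some s := by
  unfold orbitPath
  split_ifs with h
  · simp [GPath.initv]
  · simp [GPath.initv]

lemma mem_orbitPath {f : V → V} {Z : Set V} {s v : V} (hv : v ∈ (orbitPath f Z s).verts) :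
    ∃ n, (∀ i < n, f^[i] s ∉ Z) ∧ f^[n] s = v := by
  classical
  unfold orbitPath at hv
  split_ifs at hv with h
  · simp only [GPath.verts, List.mem_map, List.mem_range, Set.mem_ofPred_eq] at hv
    obtain ⟨n, hn, rfl⟩ := hv
    exact ⟨n, fun i hi => Nat.find_min h (by omega), rfl⟩
  · obtain ⟨n, rfl⟩ := hv
    push Not at h
    exact ⟨n, fun i _ => h i, rfl⟩

lemma orbitPath_terv {f : V → V} {Z : Set V} {s z : V} {n : ℕ} (hn : ∀ i < n, f^[i] s ∉ Z)
    (hz : z ∈ Z) (h : f^[n] s = z) : (orbitPath f Z s).terv = some z := by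
  classical
  have hex : ∃ n, f^[n] s ∈ Z := ⟨n, h ▸ hz⟩
  have hfind : Nat.find hex = n := (Nat.find_eq_iff hex).2 ⟨h ▸ hz, hn⟩
  unfold orbitPath
  rw [dif_pos hex, hfind]
  simp [GPath.terv, List.range_succ, h]

/-- If `f` is injective on a set `Dm` in which all orbits from `I ⊆ A` stay until they meet `Z`,
and `f` moves vertices of `Dm` along edges only, then these orbits form a warp. They are
disjoint paths because `f` takes no values in `A` on `Dm`. -/
lemma exists_warp (Γ : Web V) (f : V → V) (Dm Z I : Set V) (hI : I ⊆ Γ.A)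
    (hID : ∀ s ∈ I, s ∉ Z → s ∈ Dm) (hinj : Set.InjOn f Dm) (hfA : ∀ v ∈ Dm, f v ∉ Γ.A)
    (hD : ∀ v ∈ Dm, f v ∉ Z → f v ∈ Dm) (hE : ∀ v ∈ Dm, f v = v ∨ Γ.Adj v (f v)) :
    ∃ W, Γ.IsWarp W ∧ warpIn W = I ∧ ∀ z ∈ Z, Reach_s16 f I Z z → z ∈ warpTer W := by
  classical
  have hmem : ∀ s ∈ I, ∀ n, (∀ i ≤ n, f^[i] s ∉ Z) → f^[n] s ∈ Dm := by
    intro s hs n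
    induction n with
    | zero => intro h; exact hID s hs (h 0 le_rfl)
    | succ n ih =>
      intro h
      rw [Function.iterate_succ_apply']
      apply hD _ (ih fun i hi => h i (by omega))
      rw [← Function.iterate_succ_apply' f]
      exact h _ le_rfl
  have hnotA : ∀ s ∈ I, ∀ n, (∀ i < n + 1, f^[i] s ∉ Z) → f^[n + 1] s ∉ Γ.A := by
    intro s hs n h
    rw [Function.iterate_succ_apply']
    exact hfA _ (hmem s hs n fun i hi => h i (by omega))
  have huniq : ∀ s ∈ I, ∀ s' ∈ I, ∀ m n, (∀ i < m, f^[i] s ∉ Z) → (∀ i < n, f^[i] s' ∉ Z) →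
      f^[m] s = f^[n] s' → m = n ∧ s = s' := by
    intro s hs s' hs' m
    induction m with
    | zero =>
      intro n _ h2 h
      cases n with
      | zero => exact ⟨rfl, h⟩
      | succ n =>
        have hsA := hnotA s' hs' n h2
        rw [← h] at hsA
        exact absurd (hI hs) hsA
    | succ m ih =>
      intro n h1 h2 h
      cases n with
      | zero =>
        have hsA := hnotA s hs m h1
        rw [h] at hsA
        exact absurd (hI hs') hsA
      | succ n =>
        rw [Function.iterate_succ_apply', Function.iterate_succ_apply'] at h
        have := hinj (hmem s hs m fun i hi => h1 i (by omega))
          (hmem s' hs' n fun i hi => h2 i (by omega)) h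
        obtain ⟨rfl, h'⟩ := ih n (fun i hi => h1 i (by omega)) (fun i hi => h2 i (by omega)) this
        exact ⟨rfl, h'⟩
  have hadj : ∀ s ∈ I, ∀ n, (∀ i < n + 1, f^[i] s ∉ Z) → Γ.Adj (f^[n] s) (f^[n + 1] s) := by
    intro s hs n h
    have h1 := hE _ (hmem s hs n fun i hi => h i (by omega))
    rw [← Function.iterate_succ_apply' f] at h1
    rcases h1 with h1 | h1
    · have := (huniq s hs s hs _ _ h (fun i hi => h i (by omega)) h1).1
      omega
    · exact h1
  refine ⟨orbitPath f Z '' I, ⟨?_, ?_⟩, ?_, ?_⟩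
  · rintro _ ⟨s, hs, rfl⟩
    unfold orbitPath
    split_ifs with h
    · have hmin : ∀ i < Nat.find h, f^[i] s ∉ Z := fun i hi => Nat.find_min h hi
      refine ⟨by simp, ?_, ?_⟩
      · refine List.Nodup.map_on ?_ List.nodup_range
        intro i hi j hj hij
        rw [List.mem_range] at hi hj
        exact (huniq s hs s hs i j (fun k hk => hmin k (by omega))
          (fun k hk => hmin k (by omega)) hij).1
      · refine List.isChain_iff_getElem.2 fun i hi => ?_
        simp only [List.length_map, List.length_range] at hi
        simp only [List.getElem_map, List.getElem_range]
        exact hadj s hs i fun k hk => hmin k (by omega)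
    · push Not at h
      exact ⟨fun i j hij => (huniq s hs s hs i j (fun k _ => h k) (fun k _ => h k) hij).1,
        fun n => hadj s hs n fun k _ => h k⟩
  · rintro _ ⟨s, hs, rfl⟩ _ ⟨s', hs', rfl⟩ hne v hv hv'
    obtain ⟨m, hm, rfl⟩ := mem_orbitPath hv
    obtain ⟨n, hn, hmn⟩ := mem_orbitPath hv'
    exact hne (by rw [(huniq s hs s' hs' m n hm hn hmn.symm).2])
  · ext v
    simp [warpIn, orbitPath_initv]
  · rintro z hz ⟨s, hs, n, hn, h⟩
    exact ⟨_, ⟨s, hs, rfl⟩, orbitPath_terv hn hz h⟩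

/-! ### Alternating paths -/

/-- The vertices of `U ∪ D` reached from `U` by alternating paths with at most `n` matching edges,
with respect to the matching `v ↦ f v` (`v ∈ D`) in the bipartite graph where `u` is joined to
itself and to its out-neighbours. -/
def layer (E : V → V → Prop) (f : V → V) (U D : Set V) : ℕ → Set V
  | 0 => U
  | n + 1 => layer E f U D n ∪ {w | w ∈ D ∧ ∃ u ∈ layer E f U D n, f w = u ∨ E u (f w)}

/-- Switching along an alternating path: for every `u` in a layer there is a matching that
covers some `c ∈ U` in place of `u`, has the same image as `f₀`, and differs from `f₀` only
finitely often and only inside the layer. -/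
lemma exists_exchange (E : V → V → Prop) (f₀ : V → V) (U D : Set V) (hUD : ∀ v ∈ U, v ∉ D)
    (hinj : Set.InjOn f₀ D) (hE : ∀ v ∈ D, f₀ v = v ∨ E v (f₀ v)) (n : ℕ) :
    ∀ u ∈ layer E f₀ U D n, ∃ f : V → V, ∃ c ∈ U, u ∈ insert c D ∧
      Set.InjOn f (insert c D \ {u}) ∧ f '' (insert c D \ {u}) = f₀ '' D ∧
      (∀ v ∈ insert c D \ {u}, f v = v ∨ E v (f v)) ∧
      (∀ w, w ∉ layer E f₀ U D n → f w = f₀ w) ∧ {w | f w ≠ f₀ w}.Finite := by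
  classical
  induction n with
  | zero =>
    intro u hu
    have : insert u D \ {u} = D := by
      ext v
      have := hUD u hu
      simp only [Set.mem_sdiff, Set.mem_insert_iff, Set.mem_singleton_iff]
      constructor
      · tauto
      · intro hv
        exact ⟨Or.inr hv, fun h => this (h ▸ hv)⟩
    refine ⟨f₀, u, hu, Or.inl rfl, ?_, ?_, ?_, fun _ _ => rfl, by simp⟩ <;> rw [this]
    · exact hinj
    · exact hE
  | succ n ih =>
    intro w hw
    by_cases hwn : w ∈ layer E f₀ U D n
    · obtain ⟨f, c, hc, h1, h2, h3, h4, h5, h6⟩ := ih w hwn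
      exact ⟨f, c, hc, h1, h2, h3, h4, fun v hv => h5 v fun h => hv (Or.inl h), h6⟩
    · rcases hw with hw | ⟨hwD, u, hu, huw⟩
      · exact absurd hw hwn
      obtain ⟨f, c, hc, h1, h2, h3, h4, h5, h6⟩ := ih u hu
      have hfw : f w = f₀ w := h5 w hwn
      have hne : w ≠ u := fun h => hwn (h ▸ hu)
      have hwold : w ∈ insert c D \ {u} := ⟨Or.inr hwD, hne⟩
      refine ⟨Function.update f u (f₀ w), c, hc, Or.inr hwD, ?_, ?_, ?_, ?_, ?_⟩
      · rintro v ⟨hv, hvw⟩ v' ⟨hv', hvw'⟩ h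
        simp only [Set.mem_singleton_iff] at hvw hvw'
        by_cases hvu : v = u <;> by_cases hvu' : v' = u
        · rw [hvu, hvu']
        · subst hvu
          rw [Function.update_self, Function.update_of_ne hvu', ← hfw] at h
          exact absurd (h2 hwold ⟨hv', hvu'⟩ h).symm hvw'
        · subst hvu'
          rw [Function.update_self, Function.update_of_ne hvu, ← hfw] at h
          exact absurd (h2 ⟨hv, hvu⟩ hwold h) hvw
        · rw [Function.update_of_ne hvu, Function.update_of_ne hvu'] at h
          exact h2 ⟨hv, hvu⟩ ⟨hv', hvu'⟩ h
      · rw [← h3]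
        ext y
        constructor
        · rintro ⟨v, ⟨hv, hvw⟩, rfl⟩
          by_cases hvu : v = u
          · subst hvu
            exact ⟨w, hwold, by rw [Function.update_self, hfw]⟩
          · exact ⟨v, ⟨hv, hvu⟩, by rw [Function.update_of_ne hvu]⟩
        · rintro ⟨v, ⟨hv, hvu⟩, rfl⟩
          by_cases hvw : v = w
          · subst hvw
            exact ⟨u, ⟨h1, fun h => hvu h.symm⟩, by rw [Function.update_self, hfw]⟩
          · exact ⟨v, ⟨hv, hvw⟩, by rw [Function.update_of_ne hvu]⟩
      · rintro v ⟨hv, hvw⟩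
        by_cases hvu : v = u
        · subst hvu
          rwa [Function.update_self]
        · rw [Function.update_of_ne hvu]
          exact h4 v ⟨hv, hvu⟩
      · intro v hv
        have hvn : v ∉ layer E f₀ U D n := fun h => hv (Or.inl h)
        have hvu : v ≠ u := fun h => hvn (h ▸ hu)
        rw [Function.update_of_ne hvu]
        exact h5 v hvn
      · refine (h6.insert u).subset fun v hv => ?_
        by_cases hvu : v = u
        · exact Or.inl hvu
        · right
          simpa [Function.update_of_ne hvu] using hv

lemma exists_exit {E : V → V → Prop} {R : Set V} (l : List V) : ∀ u, List.IsChain E (u :: l) →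
    u ∈ R → (∃ s ∈ l, s ∉ R) → ∃ y ∈ R, ∃ z, z ∉ R ∧ z ∈ l ∧ E y z := by
  induction l with
  | nil => rintro u - - ⟨s, hs, -⟩; simp at hs
  | cons b l ih =>
    rintro u hc hu ⟨s, hs, hsR⟩
    rw [List.isChain_cons_cons] at hc
    by_cases hb : b ∈ R
    · have hsl : s ∈ l := by
        rcases List.mem_cons.1 hs with rfl | h
        · exact absurd hb hsR
        · exact h
      obtain ⟨y, hy, z, hz, hzl, hyz⟩ := ih b hc.2 hb ⟨s, hsl, hsR⟩
      exact ⟨y, hy, z, hz, List.mem_cons_of_mem _ hzl, hyz⟩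
    · exact ⟨u, hu, b, hb, List.mem_cons_self, hc.1⟩

/-- Backward orbits of `f` that stay outside `A` cannot be infinite, as `f` agrees with `f₀` up to
finitely many vertices and `f₀` increases `pos` where
it moves a vertex. Hence orbits from `I` reach every vertex of `T`. -/
lemma reach_of_finite_diff (A D T I : Set V) (f₀ f : V → V) (pos : V → ℕ) (c : V) (hcA : c ∈ A)
    (hpos : ∀ v ∈ D, f₀ v ≠ v → pos (f₀ v) = pos v + 1)
    (hDT : ∀ v ∈ insert c D, v ∉ T)
    (himg : ∀ y, y ∉ A → ∃ w ∈ insert c D, f w = y)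
    (hstart : ∀ v ∈ A, v ∈ T ∨ v ∈ insert c D → v ∈ I)
    (hfin : {w | f w ≠ f₀ w}.Finite) : ∀ z ∈ T, Reach_s16 f I T z := by
  intro z hz
  by_contra hbad
  have hstep : ∀ v, ∃ w, ((v ∈ T ∨ v ∈ insert c D) ∧ ¬ Reach_s16 f I T v) →
      w ∈ insert c D ∧ ¬ Reach_s16 f I T w ∧ f w = v := by
    intro v
    by_cases hv : (v ∈ T ∨ v ∈ insert c D) ∧ ¬ Reach_s16 f I T v
    · have hvA : v ∉ A := fun h => hv.2 ⟨v, hstart v h hv.1, 0, by simp, rfl⟩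
      obtain ⟨w, hw, rfl⟩ := himg v hvA
      exact ⟨w, fun _ => ⟨hw, fun h => hv.2 (h.step (hDT w hw)), rfl⟩⟩
    · exact ⟨v, fun h => absurd h hv⟩
  choose g hg using hstep
  set b : ℕ → V := fun n => g^[n] z with hb
  have hb_succ : ∀ n, b (n + 1) = g (b n) := fun n => Function.iterate_succ_apply' _ _ _
  have hbB : ∀ n, (b n ∈ T ∨ b n ∈ insert c D) ∧ ¬ Reach_s16 f I T (b n) := by
    intro n
    induction n with
    | zero => exact ⟨Or.inl hz, hbad⟩
    | succ n ih =>
      rw [hb_succ]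
      exact ⟨Or.inr (hg _ ih).1, (hg _ ih).2.1⟩
  have hbD : ∀ n, b (n + 1) ∈ insert c D := fun n => by
    rw [hb_succ]; exact (hg _ (hbB n)).1
  have hfb : ∀ n, f (b (n + 1)) = b n := fun n => by
    rw [hb_succ]; exact (hg _ (hbB n)).2.2
  -- A repetition on the backward orbit would put its end `z ∈ T` into the domain of `f`.
  have hne : ∀ i k, b i ≠ b (i + (k + 1)) := by
    intro i
    induction i with
    | zero =>
      intro k h
      rw [Nat.zero_add] at h
      exact hDT _ (hbD k) (h ▸ hz)
    | succ i ih =>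
      intro k h
      apply ih k
      rw [← hfb i, ← hfb (i + (k + 1)), h]
      congr 2
      omega
  have hbinj : Function.Injective b := by
    intro i j hij
    rcases lt_trichotomy i j with h | h | h
    · obtain ⟨k, rfl⟩ := Nat.exists_eq_add_of_lt h
      exact absurd hij (hne i k)
    · exact h
    · obtain ⟨k, rfl⟩ := Nat.exists_eq_add_of_lt h
      exact absurd hij.symm (hne j k)
  have hfin' : {n | f (b n) ≠ f₀ (b n)}.Finite := hfin.preimage hbinj.injOn
  obtain ⟨N, hN⟩ := hfin'.bddAbove
  have heq : ∀ n, N < n → f (b n) = f₀ (b n) := by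
    intro n hn
    by_contra h
    exact absurd (hN h) (by omega)
  have hdesc : ∀ n, N ≤ n → pos (b n) = pos (b (n + 1)) + 1 := by
    intro n hn
    have hD : b (n + 1) ∈ D := by
      rcases hbD n with h | h
      · exfalso
        refine (hbB (n + 1)).2 ⟨b (n + 1), hstart _ (h ▸ hcA) (hbB (n + 1)).1, 0, by simp, rfl⟩
      · exact h
    have h1 : f₀ (b (n + 1)) = b n := by rw [← heq (n + 1) (by omega), hfb]
    have h2 := hpos _ hD (by rw [h1]; exact hne n 0)
    rwa [h1] at h2
  have hdesc' : ∀ k, pos (b N) = pos (b (N + k)) + k := by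
    intro k
    induction k with
    | zero => rfl
    | succ k ih =>
      have := hdesc (N + k) (by omega)
      rw [ih, this, Nat.add_assoc N k 1]
      omega
  have := hdesc' (pos (b N) + 1)
  omega

/-- The augmenting-path argument, for a matching `f₀` of `(T ∪ U)ᶜ` onto `(A ∪ {t})ᶜ` in the
bipartite graph where each vertex is joined to itself and to its out-neighbours. -/
lemma hindered_of_matching (Γ : Web V) (f₀ : V → V) (T U : Set V) (t a p : V) (pos : V → ℕ)
    (hUA : U ⊆ Γ.A) (hUT : ∀ v ∈ U, v ∉ T) (ht : t ∈ T)
    (ha : a ∈ U) (hp : p ∈ U) (hap : a ≠ p) (hsep : Separates Γ.Adj Γ.A Γ.B T)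
    (hinj : Set.InjOn f₀ (T ∪ U)ᶜ) (himg : f₀ '' (T ∪ U)ᶜ = (insert t Γ.A)ᶜ) (htA : t ∉ Γ.A)
    (hE : ∀ v ∈ (T ∪ U)ᶜ, f₀ v = v ∨ Γ.Adj v (f₀ v))
    (hpos : ∀ v ∈ (T ∪ U)ᶜ, f₀ v ≠ v → pos (f₀ v) = pos v + 1) : Γ.Hindered := by
  classical
  set D : Set V := (T ∪ U)ᶜ with hDdef
  have hUD : ∀ v ∈ U, v ∉ D := fun v hv h => h (Or.inr hv)
  have hDT : ∀ v ∈ D, v ∉ T := fun v hv h => hv (Or.inl h)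
  have hDU : ∀ v ∈ D, v ∉ U := fun v hv h => hv (Or.inr h)
  have hD : ∀ v, v ∉ T → v ∉ U → v ∈ D := fun v h1 h2 h => h.elim h1 h2
  have hf₀ : ∀ v ∈ D, f₀ v ≠ t ∧ f₀ v ∉ Γ.A := by
    intro v hv
    have : f₀ v ∈ (insert t Γ.A)ᶜ := himg ▸ ⟨v, hv, rfl⟩
    exact ⟨fun h => this (Or.inl h), fun h => this (Or.inr h)⟩
  have hpre : ∀ y, y ≠ t → y ∉ Γ.A → ∃ w ∈ D, f₀ w = y := by
    intro y h1 h2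
    have : y ∈ f₀ '' D := by
      rw [himg]
      rintro (h | h)
      exacts [h1 h, h2 h]
    exact this
  by_cases haug : ∃ n, ∃ u ∈ layer Γ.Adj f₀ U D n, Γ.Adj u t
  · obtain ⟨n, u, hu, hut⟩ := haug
    obtain ⟨f, c, hc, hucD, hfinj, hfimg, hfE, -, hffin⟩ :=
      exists_exchange Γ.Adj f₀ U D hUD hinj hE n u hu
    have hcA : c ∈ Γ.A := hUA hc
    -- Matching `u` to `t` covers the last unmatched vertex on the right.
    set f' := Function.update f u t with hf'
    have hf'u : f' u = t := Function.update_self ..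
    have hf'ne : ∀ v, v ≠ u → f' v = f v := fun v hv => Function.update_of_ne hv ..
    have hold : ∀ v ∈ insert c D, v ≠ u → f v ≠ t ∧ f v ∉ Γ.A := by
      intro v hv hvu
      have : f v ∈ f₀ '' D := hfimg ▸ ⟨v, ⟨hv, hvu⟩, rfl⟩
      obtain ⟨w, hw, hwv⟩ := this
      exact hwv ▸ hf₀ w hw
    have hcDT : ∀ v ∈ insert c D, v ∉ T := by
      rintro v (rfl | hv)
      · exact hUT _ hc
      · exact hDT v hv
    have hf'A : ∀ v ∈ insert c D, f' v ∉ Γ.A := by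
      intro v hv
      by_cases hvu : v = u
      · rw [hvu, hf'u]; exact htA
      · rw [hf'ne v hvu]; exact (hold v hv hvu).2
    set I : Set V := Γ.A \ (U \ {c}) with hI
    obtain ⟨W, hW, hWin, hWter⟩ := exists_warp Γ f' (insert c D) T I Set.sdiff_subset
      (by
        rintro s ⟨hsA, hsU⟩ hsT
        by_cases hsc : s = c
        · exact Or.inl hsc
        · exact Or.inr (hD s hsT fun h => hsU ⟨h, hsc⟩))
      (by
        intro v hv v' hv' h
        by_cases hvu : v = u <;> by_cases hvu' : v' = u
        · rw [hvu, hvu']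
        · rw [hvu, hf'u, hf'ne _ hvu'] at h
          exact absurd h.symm (hold v' hv' hvu').1
        · rw [hvu', hf'u, hf'ne _ hvu] at h
          exact absurd h (hold v hv hvu).1
        · rw [hf'ne _ hvu, hf'ne _ hvu'] at h
          exact hfinj ⟨hv, hvu⟩ ⟨hv', hvu'⟩ h)
      hf'A
      (fun v hv h => Or.inr (hD _ h fun h' => hf'A v hv (hUA h')))
      (by
        intro v hv
        by_cases hvu : v = u
        · rw [hvu, hf'u]; exact Or.inr hut
        · rw [hf'ne v hvu]; exact hfE v ⟨hv, hvu⟩)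
    have hreach : ∀ z ∈ T, Reach_s16 f' I T z := by
      refine reach_of_finite_diff Γ.A D T I f₀ f' pos c hcA hpos hcDT ?_ ?_ ?_
      · intro y hy
        by_cases hyt : y = t
        · exact ⟨u, hucD, hyt ▸ hf'u⟩
        · obtain ⟨w, hw, hwy⟩ := hpre y hyt hy
          have : y ∈ f '' (insert c D \ {u}) := hfimg ▸ ⟨w, hw, hwy⟩
          obtain ⟨w', ⟨hw', hne⟩, rfl⟩ := this
          exact ⟨w', hw', hf'ne _ hne⟩
      · intro v hvA hv
        refine ⟨hvA, fun h => ?_⟩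
        rcases hv with hv | hv | hv
        · exact hUT v h.1 hv
        · exact h.2 hv
        · exact hDU v hv h.1
      · refine (hffin.insert u).subset fun v hv => ?_
        by_cases hvu : v = u
        · exact Or.inl hvu
        · right
          rw [Set.mem_ofPred_eq, hf'ne v hvu] at hv
          exact hv
    refine ⟨W, ⟨hW, hWin ▸ Set.sdiff_subset, ?_⟩, ?_⟩
    · intro q hq
      obtain ⟨s, hs, hsq⟩ := hsep q hq
      exact ⟨s, hWter s hs (hreach s hs), hsq⟩
    · rw [hWin]
      intro h
      have hmiss : ∀ v ∈ U, v = c := by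
        intro v hv
        by_contra hvc
        have : v ∈ I := h ▸ hUA hv
        exact this.2 ⟨hv, hvc⟩
      exact hap ((hmiss a ha).trans (hmiss p hp).symm)
  · push Not at haug
    set R : Set V := {v | ∃ n, v ∈ layer Γ.Adj f₀ U D n} with hR
    have hUR : U ⊆ R := fun v hv => ⟨0, hv⟩
    have hRcases : ∀ v ∈ R, v ∈ U ∨ v ∈ D := by
      rintro v ⟨n, hn⟩
      induction n with
      | zero => exact Or.inl hn
      | succ n ih =>
        rcases hn with hn | hn
        · exact ih hn
        · exact Or.inr hn.1
    have hRT : ∀ v ∈ R, v ∉ T := fun v hv => (hRcases v hv).elim (hUT v) (hDT v)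
    have hclosed : ∀ u ∈ R, ∀ y, y ∉ Γ.A → (y = u ∨ Γ.Adj u y) →
        ∃ w ∈ D, w ∈ R ∧ f₀ w = y := by
      rintro u ⟨n, hu⟩ y hy huy
      have hyt : y ≠ t := by
        rintro rfl
        rcases huy with rfl | h
        · exact hRT _ ⟨n, hu⟩ ht
        · exact haug n u hu h
      obtain ⟨w, hw, rfl⟩ := hpre y hyt hy
      exact ⟨w, hw, ⟨n + 1, Or.inr ⟨hw, u, hu, huy⟩⟩, rfl⟩
    obtain ⟨W, hW, hWin, hWter⟩ := exists_warp Γ f₀ (R \ U) Rᶜ (Γ.A \ U) Set.sdiff_subset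
      (fun s hs hsR => ⟨not_not.1 hsR, hs.2⟩)
      (hinj.mono fun v hv => (hRcases v hv.1).resolve_left hv.2)
      (fun v hv => (hf₀ v ((hRcases v hv.1).resolve_left hv.2)).2)
      (fun v hv h => ⟨not_not.1 h, fun h' =>
        (hf₀ v ((hRcases v hv.1).resolve_left hv.2)).2 (hUA h')⟩)
      (fun v hv => hE v ((hRcases v hv.1).resolve_left hv.2))
    -- The predecessors of a vertex of `R` on its path lie in `R`, so the orbit from `A \ U` gets
    -- to that vertex without leaving `R`.
    have hback : ∀ k, ∀ w ∈ D, w ∈ R → f₀ w ≠ w → pos w = k → Reach_s16 f₀ (Γ.A \ U) Rᶜ w := by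
      intro k
      induction k using Nat.strong_induction_on with
      | _ k ih =>
        intro w hwD hwR hne hk
        by_cases hwA : w ∈ Γ.A
        · exact ⟨w, ⟨hwA, hDU w hwD⟩, 0, by simp, rfl⟩
        · obtain ⟨w', hw'D, hw'R, hw'⟩ := hclosed w hwR w hwA (Or.inl rfl)
          have hne' : f₀ w' ≠ w' := by
            intro h
            have : w = w' := hw'.symm.trans h
            subst this
            exact hne h
          have h1 := hpos w' hw'D hne'
          rw [hw'] at h1
          have := ih (pos w') (by omega) w' hw'D hw'R hne' rfl
          have := this.step (fun h => h hw'R)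
          rwa [hw'] at this
    refine ⟨W, ⟨hW, hWin ▸ Set.sdiff_subset, ?_⟩, ?_⟩
    · intro q hq
      obtain ⟨s, hsT, hsq⟩ := hsep q hq
      obtain ⟨⟨hq1, hq2, hq3⟩, ⟨x, hxA, hqx⟩, -⟩ := hq
      cases q with
      | nil => exact absurd rfl hq1
      | cons y l =>
        simp only [List.head?_cons, Option.some.injEq] at hqx
        subst hqx
        by_cases hyR : y ∈ R
        · have hsR : s ∉ R := fun h => hRT s h hsT
          have hsl : s ∈ l := by
            rcases List.mem_cons.1 hsq with rfl | h
            · exact absurd hyR hsR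
            · exact h
          obtain ⟨u, huR, z, hzR, hzl, huz⟩ := exists_exit l y hq3 hyR ⟨s, hsl, hsR⟩
          obtain ⟨w, hwD, hwR, hwz⟩ := hclosed u huR z (Γ.not_into_A _ _ huz) (Or.inr huz)
          have hne : f₀ w ≠ w := by
            intro h
            exact hzR (by rw [← hwz, h]; exact hwR)
          have := (hback _ w hwD hwR hne rfl).step (fun h => h hwR)
          rw [hwz] at this
          exact ⟨z, hWter z hzR this, List.mem_cons_of_mem _ hzl⟩
        · exact ⟨y, hWter y hyR ⟨y, ⟨hxA, fun h => hyR (hUR h)⟩, 0, by simp, rfl⟩,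
            List.mem_cons_self⟩
    · rw [hWin]
      intro h
      have : a ∈ Γ.A \ U := by rw [h]; exact hUA ha
      exact this.2 ha

/-! ### From warps to matchings -/

/-- A warp that misses two vertices of `A`, but whose terminal vertices become `A`–`B`-separating
after adding a single vertex off the warp, can be improved to a hindrance. -/
lemma hindered_of_warp (Γ : Web V) (W : Set (GPath V)) (t a p : V) (hW : Γ.IsWarp W)
    (hin : warpIn W ⊆ Γ.A) (htA : t ∉ Γ.A) (htW : ∀ P ∈ W, t ∉ P.verts)
    (ha : a ∈ Γ.A \ warpIn W) (hp : p ∈ Γ.A \ warpIn W) (hap : a ≠ p)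
    (hsep : Separates Γ.Adj Γ.A Γ.B (insert t (warpTer W))) : Γ.Hindered := by
  classical
  have huniq : ∀ P ∈ W, ∀ Q ∈ W, ∀ m n v, P.get m = some v → Q.get n = some v →
      P = Q ∧ m = n := by
    intro P hP Q hQ m n v h1 h2
    have hPQ : P = Q := by
      by_contra hne
      exact hW.2 P hP Q hQ hne v ((P.mem_verts_iff v).2 ⟨m, h1⟩) ((Q.mem_verts_iff v).2 ⟨n, h2⟩)
    subst hPQ
    exact ⟨rfl, (hW.1 P hP).get_inj h1 h2⟩
  have hAin : ∀ P ∈ W, ∀ n, ∀ v ∈ Γ.A, P.get n = some v → v ∈ warpIn W := by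
    intro P hP n v hv h
    have := pos_eq_zero_of_mem_A Γ (hW.1 P hP) h hv
    subst this
    exact ⟨P, hP, P.initv_eq ▸ h⟩
  have htW' : ∀ P ∈ W, ∀ n, P.get n ≠ some t :=
    fun P hP n h => htW P hP ((P.mem_verts_iff t).2 ⟨n, h⟩)
  -- `f v` is the successor of `v` on `W`; vertices without one are fixed.
  have hf : ∀ v, ∃ y, (∀ P ∈ W, ∀ n, P.get n = some v → ∀ z, P.get (n + 1) = some z → y = z) ∧
      (y = v ∨ ∃ P ∈ W, ∃ n, P.get n = some v ∧ P.get (n + 1) = some y) := by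
    intro v
    by_cases h : ∃ y, ∃ P ∈ W, ∃ n, P.get n = some v ∧ P.get (n + 1) = some y
    · obtain ⟨y, P, hP, n, h1, h2⟩ := h
      refine ⟨y, ?_, Or.inr ⟨P, hP, n, h1, h2⟩⟩
      intro Q hQ m h3 z h4
      obtain ⟨rfl, rfl⟩ := huniq P hP Q hQ n m v h1 h3
      exact Option.some.inj (h2.symm.trans h4)
    · exact ⟨v, fun P hP n h1 z h2 => absurd ⟨z, P, hP, n, h1, h2⟩ h, Or.inl rfl⟩
  choose f hf1 hf2 using hf
  have hpos : ∀ v, ∃ k, ∀ P ∈ W, ∀ n, P.get n = some v → k = n := by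
    intro v
    by_cases h : ∃ k, ∃ P ∈ W, P.get k = some v
    · obtain ⟨k, P, hP, h1⟩ := h
      exact ⟨k, fun Q hQ n h2 => (huniq P hP Q hQ k n v h1 h2).2⟩
    · exact ⟨0, fun P hP n h2 => absurd ⟨n, P, hP, h2⟩ h⟩
  choose pos hpos using hpos
  set T := insert t (warpTer W) with hT
  set U := Γ.A \ warpIn W with hU
  have hTW : ∀ v ∈ T, v = t ∨ ∃ P ∈ W, ∃ n, P.get n = some v ∧ P.get (n + 1) = none := by
    rintro v (hv | ⟨P, hP, hv⟩)
    · exact Or.inl hv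
    · exact Or.inr ⟨P, hP, (P.terv_iff v).1 hv⟩
  -- A vertex on `W` that is not terminal has a successor.
  have hsucc : ∀ P ∈ W, ∀ n v, P.get n = some v → v ∉ T → P.get (n + 1) = some (f v) := by
    intro P hP n v h hv
    cases h' : P.get (n + 1) with
    | none => exact absurd (Or.inr ⟨P, hP, (P.terv_iff v).2 ⟨n, h, h'⟩⟩) hv
    | some y => rw [hf1 v P hP n h y h']
  refine hindered_of_matching Γ f T U t a p pos Set.sdiff_subset ?_ (Or.inl rfl) ha hp hap hsep
    ?_ ?_ htA ?_ ?_
  · intro v hv hvT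
    rcases hTW v hvT with rfl | ⟨P, hP, n, h, -⟩
    · exact htA hv.1
    · exact hv.2 (hAin P hP n v hv.1 h)
  · intro v hv v' hv' h
    have hvT : v ∉ T := fun h => hv (Or.inl h)
    have hvT' : v' ∉ T := fun h => hv' (Or.inl h)
    rcases hf2 v with h1 | ⟨P, hP, n, h1, h2⟩ <;> rcases hf2 v' with h3 | ⟨Q, hQ, m, h3, h4⟩
    · rw [← h1, ← h3, h]
    · have h5 : Q.get (m + 1) = some v := by rw [h4, ← h, h1]
      have h6 := hsucc Q hQ _ _ h5 hvT
      rw [h1] at h6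
      have := (huniq Q hQ Q hQ _ _ _ h5 h6).2
      omega
    · have h5 : P.get (n + 1) = some v' := by rw [h2, h, h3]
      have h6 := hsucc P hP _ _ h5 hvT'
      rw [h3] at h6
      have := (huniq P hP P hP _ _ _ h5 h6).2
      omega
    · rw [h] at h2
      obtain ⟨rfl, h5⟩ := huniq P hP Q hQ _ _ _ h2 h4
      obtain rfl : n = m := by omega
      exact Option.some.inj (h1.symm.trans h3)
  · ext y
    constructor
    · rintro ⟨v, hv, rfl⟩ hy
      rcases hf2 v with h1 | ⟨P, hP, n, h1, h2⟩
      · rw [h1] at hy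
        rcases hy with hy | hy
        · exact hv (Or.inl (Or.inl hy))
        · by_cases hvin : v ∈ warpIn W
          · obtain ⟨P, hP, h2⟩ := hvin
            rw [P.initv_eq] at h2
            have h3 := hsucc P hP _ _ h2 fun h => hv (Or.inl h)
            rw [h1] at h3
            have := (huniq P hP P hP _ _ _ h2 h3).2
            omega
          · exact hv (Or.inr ⟨hy, hvin⟩)
      · rcases hy with hy | hy
        · exact htW' P hP _ (hy ▸ h2)
        · have := pos_eq_zero_of_mem_A Γ (hW.1 P hP) h2 hy
          omega
    · intro hy
      have hyt : y ≠ t := fun h => hy (Or.inl h)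
      have hyA : y ∉ Γ.A := fun h => hy (Or.inr h)
      by_cases hyW : ∃ P ∈ W, ∃ n, P.get n = some y
      · obtain ⟨P, hP, n, h⟩ := hyW
        cases n with
        | zero => exact absurd (hin ⟨P, hP, P.initv_eq ▸ h⟩) hyA
        | succ n =>
          obtain ⟨w, hw⟩ := GPath.get_pred h
          refine ⟨w, ?_, hf1 w P hP n hw y h⟩
          rintro (hwT | hwU)
          · rcases hTW w hwT with rfl | ⟨Q, hQ, m, h1, h2⟩
            · exact htW' P hP n hw
            · obtain ⟨rfl, rfl⟩ := huniq P hP Q hQ _ _ _ hw h1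
              rw [h] at h2
              cases h2
          · exact hwU.2 (hAin P hP n w hwU.1 hw)
      · refine ⟨y, ?_, ?_⟩
        · rintro (hyT | hyU)
          · rcases hTW y hyT with h | ⟨P, hP, n, h, -⟩
            · exact hyt h
            · exact hyW ⟨P, hP, n, h⟩
          · exact hyA hyU.1
        · rcases hf2 y with h | ⟨P, hP, n, h, -⟩
          · exact h
          · exact absurd ⟨P, hP, n, h⟩ hyW
  · intro v _
    rcases hf2 v with h | ⟨P, hP, n, h1, h2⟩
    · exact Or.inl h
    · exact Or.inr ((hW.1 P hP).get_adj h1 h2)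
  · intro v _ hne
    rcases hf2 v with h | ⟨P, hP, n, h1, h2⟩
    · exact absurd h hne
    · rw [hpos _ P hP _ h1, hpos _ P hP _ h2]

/-! ### Deleting vertices -/

lemma GPath.IsPath.delete {Γ : Web V} {X : Set V} {P : GPath V} (hP : P.IsPath Γ.Adj)
    (hX : ∀ v ∈ P.verts, v ∉ X) : P.IsPath (Γ.delete X).Adj := by
  cases P with
  | fin l =>
    refine ⟨hP.1, hP.2.1, List.isChain_iff_getElem.2 fun i hi => ?_⟩
    exact ⟨List.isChain_iff_getElem.1 hP.2.2 i hi, hX _ (List.getElem_mem _),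
      hX _ (List.getElem_mem _)⟩
  | inf f => exact ⟨hP.1, fun n => ⟨hP.2 n, hX _ ⟨n, rfl⟩, hX _ ⟨n + 1, rfl⟩⟩⟩

/-- Every path of `Γ - x` avoids `x`, so `x` can be dropped from a separator. -/
lemma Separates.delete {Γ : Web V} {x : V} {S S' : Set V} (h : Separates Γ.Adj Γ.A Γ.B S)
    (hS : ∀ s ∈ S, s ≠ x → s ∈ S') :
    Separates (Γ.delete {x}).Adj (Γ.delete {x}).A (Γ.delete {x}).B S' := by
  rintro q ⟨⟨hq1, hq2, hq3⟩, ⟨y, hy, hqy⟩, ⟨z, hz, hqz⟩⟩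
  have hxq : x ∉ q := by
    cases q with
    | nil => simp
    | cons b l =>
      intro hx
      simp only [List.head?_cons, Option.some.injEq] at hqy
      rcases List.mem_cons.1 hx with h | hx
      · exact hy.2 (hqy ▸ h.symm)
      · obtain ⟨u, -, v, hv, -, huv⟩ := exists_exit (R := {v | v ≠ x}) l b hq3
          (fun h => hy.2 (hqy ▸ h)) ⟨x, hx, fun h => h rfl⟩
        exact huv.2.2 (not_not.1 hv)
  obtain ⟨s, hs, hsq⟩ := h q ⟨⟨hq1, hq2, hq3.imp fun _ _ h => h.1⟩, ⟨y, hy.1, hqy⟩, ⟨z, hz.1, hqz⟩⟩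
  exact ⟨s, hS s hs fun h => hxq (h ▸ hsq), hsq⟩

lemma hindered_delete_singleton (Γ : Web V) (h : Γ.Hindered) (x : V) (hx : x ∉ Γ.A) :
    (Γ.delete {x}).Hindered := by
  obtain ⟨W, ⟨hW, hin, hsep⟩, hne⟩ := h
  obtain ⟨a, haA, haW⟩ : ∃ a ∈ Γ.A, a ∉ warpIn W := by
    by_contra hcon
    push Not at hcon
    exact hne (Set.Subset.antisymm hin hcon)
  set W' : Set (GPath V) := {P | P ∈ W ∧ x ∉ P.verts} with hW'def
  have hA : (Γ.delete {x}).A = Γ.A := Set.sdiff_singleton_eq_self hx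
  have hW' : (Γ.delete {x}).IsWarp W' := by
    refine ⟨fun P hP => (hW.1 P hP.1).delete ?_, fun P hP Q hQ => hW.2 P hP.1 Q hQ.1⟩
    rintro v hv rfl
    exact hP.2 hv
  have hsub : warpIn W' ⊆ warpIn W := fun v ⟨P, hP, h⟩ => ⟨P, hP.1, h⟩
  have hin' : warpIn W' ⊆ (Γ.delete {x}).A := hA ▸ hsub.trans hin
  have ha : a ∈ (Γ.delete {x}).A \ warpIn W' := ⟨hA ▸ haA, fun h => haW (hsub h)⟩
  by_cases hcase : ∀ s ∈ warpTer W, s ≠ x → s ∈ warpTer W'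
  · exact ⟨W', ⟨hW', hin', hsep.delete hcase⟩, fun h => ha.2 (h ▸ ha.1)⟩
  · push Not at hcase
    obtain ⟨t, ⟨P, hP, htP⟩, htx, htW'⟩ := hcase
    have hxP : x ∈ P.verts := by
      by_contra hxP
      exact htW' ⟨P, ⟨hP, hxP⟩, htP⟩
    obtain ⟨n, hn, hn'⟩ := (P.terv_iff t).1 htP
    obtain ⟨p, hp⟩ := (hW.1 P hP).exists_initv
    have hpW : p ∈ warpIn W := ⟨P, hP, P.initv_eq ▸ hp⟩
    have hdisj : ∀ Q ∈ W', ∀ v ∈ P.verts, v ∉ Q.verts := by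
      intro Q hQ
      refine hW.2 P hP Q hQ.1 ?_
      rintro rfl
      exact hQ.2 hxP
    refine hindered_of_warp _ W' t a p hW' hin' ?_ ?_ ha ?_ ?_ (hsep.delete ?_)
    · rw [hA]
      intro htA
      obtain rfl := pos_eq_zero_of_mem_A Γ (hW.1 P hP) hn htA
      obtain ⟨m, hm⟩ := (P.mem_verts_iff x).1 hxP
      -- `P` would consist of `t` alone, but it contains `x ≠ t`.
      have hnone : ∀ k, P.get (k + 1) = none := by
        intro k
        induction k with
        | zero => exact hn'
        | succ k ih =>
          cases hk : P.get (k + 1 + 1) with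
          | none => rfl
          | some y =>
            obtain ⟨u, hu⟩ := GPath.get_pred hk
            rw [ih] at hu
            cases hu
      cases m with
      | zero => exact htx (Option.some.inj (hn.symm.trans hm))
      | succ m =>
        rw [hnone m] at hm
        cases hm
    · exact fun Q hQ => hdisj Q hQ t ((P.mem_verts_iff t).2 ⟨n, hn⟩)
    · refine ⟨hA ▸ hin hpW, ?_⟩
      rintro ⟨Q, hQ, hQp⟩
      exact hdisj Q hQ p ((P.mem_verts_iff p).2 ⟨0, hp⟩)
        ((Q.mem_verts_iff p).2 ⟨0, Q.initv_eq ▸ hQp⟩)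
    · rintro rfl
      exact haW hpW
    · rintro s ⟨Q, hQ, hs⟩ -
      by_cases hxQ : x ∈ Q.verts
      · have hPQ : Q = P := by
          by_contra hne
          exact hW.2 Q hQ P hP hne x hxQ hxP
        subst hPQ
        exact Or.inl (Option.some.inj (hs.symm.trans htP))
      · exact Or.inr ⟨Q, ⟨hQ, hxQ⟩, hs⟩

lemma delete_insert (Γ : Web V) (X : Set V) (x : V) :
    Γ.delete (insert x X) = (Γ.delete X).delete {x} := by
  simp only [Web.delete, Web.mk.injEq]
  refine ⟨?_, ?_, ?_⟩
  · ext u v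
    simp only [Set.mem_insert_iff, Set.mem_singleton_iff]
    tauto
  · ext v
    simp only [Set.mem_sdiff, Set.mem_insert_iff, Set.mem_singleton_iff]
    tauto
  · ext v
    simp only [Set.mem_sdiff, Set.mem_insert_iff, Set.mem_singleton_iff]
    tauto

/-- If `Γ` is hindered and `X` is a finite set of vertices avoiding `A`, then
`Γ − X` is hindered. -/
theorem hindered_delete_finite (V : Type*) (Γ : Web V) (h : Γ.Hindered)
    (X : Set V) (hXfin : X.Finite) (hXA : ∀ v ∈ X, v ∉ Γ.A) :
    (Γ.delete X).Hindered := by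
  induction X, hXfin using Set.Finite.induction_on with
  | empty =>
    have : Γ.delete ∅ = Γ := by simp [Web.delete]
    rwa [this]
  | @insert x X _ _ ih =>
    rw [delete_insert]
    exact hindered_delete_singleton _ (ih fun v hv => hXA v (Or.inr hv)) x
      fun hx => hXA x (Or.inl rfl) hx.1

end ErdosMenger
end
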